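/- arXiv:1809.00441 — 3 statements merged into one kernel-verified Lean document; each statement's English description precedes it below -/
import Mathlib

section
/- Let T : [0,1] → [0,1] be an interval map such that, in a neighborhood of the origin, T is invertible and has the form T(x) = x(1 ± V(x)), where V : [0,∞) → (0,1) is continuous, increasing, regularly varying at 0 with index σ > 0, and satisfies liminf_{x→0} x^σ/V(x) > 0. Let ω_{α,β} be the modulus of continuity with ω_{α,β}(h) = h^α(−log h)^{−β} for 0 < h < h₀ and constant equal to h₀^α(−log h₀)^{−β} for h ≥ h₀, with h₀ small enough to make ω_{α,β} concave. Then, for α = σ and β = 0, or for 0 ≤ α < min{σ,1} and β ≥ 0 with α + β > 0, there exists a function f ∈ C^{ω_{α,β}}([0,1]) which does not admit a continuous sub-action. -/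
open MeasureTheory Set Filter Topology Real

noncomputable section

/-- A `T`-invariant Borel probability measure concentrated on `[0,1]`. -/
def InvariantProb (T : ℝ → ℝ) (μ : Measure ℝ) : Prop :=
  IsProbabilityMeasure μ ∧ μ (Set.Icc 0 1) = 1 ∧ μ.map T = μ

/-- The maximum ergodic average `m(f,T)` over invariant probability measures on `[0,1]`. -/
noncomputable def ergMax (T f : ℝ → ℝ) : ℝ :=
  sSup {r : ℝ | ∃ μ : Measure ℝ, InvariantProb T μ ∧ r = ∫ x, f x ∂μ}

/-- `u` is a sub-action for `f` with respect to `T`. -/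
def IsSubaction (T f u : ℝ → ℝ) : Prop :=
  ∀ x ∈ Set.Icc (0:ℝ) 1, f x + u x - u (T x) ≤ ergMax T f

/-- `f` belongs to `C^ω([0,1])`: a multiple of `ω` is a modulus of continuity for `f`. -/
def MemCmod (ω f : ℝ → ℝ) : Prop :=
  ∃ C > (0:ℝ), ∀ x ∈ Set.Icc (0:ℝ) 1, ∀ y ∈ Set.Icc (0:ℝ) 1, |f x - f y| ≤ C * ω |x - y|

/-- A concave modulus of continuity. -/
def ConcaveModulus (ω : ℝ → ℝ) : Prop :=
  ContinuousOn ω (Set.Ici 0) ∧ MonotoneOn ω (Set.Ici 0) ∧ ω 0 = 0 ∧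
    (∀ x, 0 ≤ x → 0 ≤ ω x) ∧ ConcaveOn ℝ (Set.Ici 0) ω

/-- `V` is regularly varying at `0` with index `σ`. -/
def RegVary0 (V : ℝ → ℝ) (σ : ℝ) : Prop :=
  ∀ t > (0:ℝ), Tendsto (fun x => V (t * x) / V x) (𝓝[>] 0) (𝓝 (t ^ σ))

/-- The modulus of continuity `ω_{α,β}`: `h^α (-log h)^{-β}` for `0 < h < h₀`, constant
for `h ≥ h₀`, and vanishing at `0`. -/
noncomputable def omegaAB (α β h₀ : ℝ) : ℝ → ℝ := fun h =>
  if h ≤ 0 then 0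
  else if h < h₀ then h ^ α * (-Real.log h) ^ (-β)
  else h₀ ^ α * (-Real.log h₀) ^ (-β)

open Asymptotics

/-!
Fix shells `[a k, 2 a k]` shrinking to the fixed point `0`. An orbit moves through each of them in
a single direction, in steps of size comparable to `a k * V (a k)`. Put on every shell a bump of
height `V (a k)`, followed in the direction of motion by a negative bump of height a large multiple
of `V (a k)`; since `V = O(ω)`, the resulting function `f` has a multiple of `ω` as modulus of
continuity. As an orbit which collects the reward of a shell pays the larger penalty before it can
leave, `f` is bounded above by a bounded coboundary, so that `m(f, T) ≤ 0`. On the other hand, an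
orbit spends about `1 / V (a k)` steps in the positive bump, so that every sub-action increases
there by an amount independent of `k`, and cannot be continuous at `0`.
-/

/-! ### Tents and moduli of continuity -/

/-- The tent function of centre `0`, half-width `1` and height `1`. -/
def tent (t : ℝ) : ℝ := max (1 - |t|) 0

lemma tent_nonneg (t : ℝ) : 0 ≤ tent t := le_max_right _ _

lemma one_sub_abs_le_tent (t : ℝ) : 1 - |t| ≤ tent t := le_max_left _ _

lemma tent_le_one (t : ℝ) : tent t ≤ 1 := max_le (by linarith [abs_nonneg t]) zero_le_one

lemma tent_eq_one_sub_abs {t : ℝ} (ht : |t| ≤ 1) : tent t = 1 - |t| := max_eq_left (by linarith)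

lemma tent_eq_zero {t : ℝ} (ht : 1 ≤ |t|) : tent t = 0 := max_eq_right (by linarith)

lemma abs_tent_sub_tent_le_abs (s t : ℝ) : |tent s - tent t| ≤ |s - t| := by
  refine (abs_max_sub_max_le_abs _ _ _).trans ?_
  rw [sub_sub_sub_cancel_left, abs_sub_comm s t]
  exact abs_abs_sub_abs_le t s

lemma abs_tent_sub_tent_le_one (s t : ℝ) : |tent s - tent t| ≤ 1 :=
  abs_sub_le_of_nonneg_of_le (tent_nonneg s) (tent_le_one s) (tent_nonneg t) (tent_le_one t)

lemma continuous_tent : Continuous tent := by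
  unfold tent
  fun_prop

lemma ConcaveModulus.min_one_div_mul_le {ω : ℝ → ℝ} (hω : ConcaveModulus ω) {a d : ℝ}
    (ha : 0 < a) (hd : 0 ≤ d) : min 1 (d / a) * ω a ≤ ω d := by
  obtain ⟨-, hmono, hzero, -, hconc⟩ := hω
  rcases le_total d a with hda | had
  · have hr : d / a ≤ 1 := (div_le_one ha).2 hda
    have h := hconc.2 ha.le self_mem_Ici (div_nonneg hd ha.le) (sub_nonneg.2 hr)
      (add_sub_cancel _ _)
    simp only [smul_eq_mul, hzero, mul_zero, add_zero, div_mul_cancel₀ _ ha.ne'] at h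
    rwa [min_eq_right hr]
  · rw [min_eq_left ((one_le_div ha).2 had), one_mul]
    exact hmono ha.le hd had

lemma ConcaveModulus.tendsto_nhdsGT_zero {ω : ℝ → ℝ} (hω : ConcaveModulus ω) :
    Tendsto ω (𝓝[>] 0) (𝓝 0) := by
  have h : Tendsto ω (𝓝[≥] 0) (𝓝 (ω 0)) := hω.1 0 self_mem_Ici
  rw [hω.2.2.1] at h
  exact h.mono_left (nhdsWithin_mono 0 Ioi_subset_Ici_self)

lemma MemCmod.sub {ω f g : ℝ → ℝ} (hf : MemCmod ω f) (hg : MemCmod ω g) :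
    MemCmod ω (fun x => f x - g x) := by
  obtain ⟨C, hC, hf⟩ := hf
  obtain ⟨D, hD, hg⟩ := hg
  refine ⟨C + D, add_pos hC hD, fun x hx y hy => ?_⟩
  calc |f x - g x - (f y - g y)| = |(f x - f y) - (g x - g y)| := by ring_nf
    _ ≤ |f x - f y| + |g x - g y| := abs_sub _ _
    _ ≤ C * ω |x - y| + D * ω |x - y| := add_le_add (hf x hx y hy) (hg x hx y hy)
    _ = (C + D) * ω |x - y| := by ring

lemma abs_ciSup_sub_ciSup_le {ι : Type*} [Nonempty ι] {f g : ι → ℝ} {r : ℝ}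
    (hf : BddAbove (range f)) (hg : BddAbove (range g)) (h : ∀ i, |f i - g i| ≤ r) :
    |(⨆ i, f i) - ⨆ i, g i| ≤ r := by
  rw [abs_sub_le_iff, sub_le_iff_le_add, sub_le_iff_le_add]
  refine ⟨ciSup_le fun i => ?_, ciSup_le fun i => ?_⟩
  · linarith [(abs_sub_le_iff.1 (h i)).1, le_ciSup hg i]
  · linarith [(abs_sub_le_iff.1 (h i)).2, le_ciSup hf i]

/-- The upper envelope of the tents of heights `h k` drawn in the coordinates `p k`. -/
def tentEnvelope {ι X : Type*} (h : ι → ℝ) (p : ι → X → ℝ) (x : X) : ℝ :=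
  ⨆ k, h k * tent (p k x)

section tentEnvelope

variable {ι X : Type*} {h : ι → ℝ} {p : ι → X → ℝ}

lemma bddAbove_range_mul_tent (hh : ∀ k, 0 ≤ h k) (hbdd : BddAbove (range h)) (x : X) :
    BddAbove (range fun k => h k * tent (p k x)) :=
  hbdd.range_mono _ fun k => mul_le_of_le_one_right (hh k) (tent_le_one _)

lemma le_tentEnvelope (hh : ∀ k, 0 ≤ h k) (hbdd : BddAbove (range h)) (k : ι) (x : X) :
    h k * tent (p k x) ≤ tentEnvelope h p x :=
  le_ciSup (bddAbove_range_mul_tent hh hbdd x) k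

lemma measurable_tentEnvelope [Countable ι] [MeasurableSpace X] (hp : ∀ k, Measurable (p k)) :
    Measurable (tentEnvelope h p) :=
  Measurable.iSup fun k => (continuous_tent.measurable.comp (hp k)).const_mul (h k)

/-- A tent of height `O(ω(a))` and width comparable to `a` has a multiple of `ω` as modulus of
continuity, uniformly in `a`, and moduli of continuity survive suprema. -/
lemma memCmod_tentEnvelope [Nonempty ι] {ω : ℝ → ℝ} (hω : ConcaveModulus ω) {a : ι → ℝ}
    {p : ι → ℝ → ℝ} {C L : ℝ} (hC : 0 < C) (hL : 1 ≤ L) (ha : ∀ k, 0 < a k) (hh : ∀ k, 0 ≤ h k)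
    (hbdd : BddAbove (range h)) (hhω : ∀ k, h k ≤ C * ω (a k))
    (hp : ∀ k x y, |p k x - p k y| ≤ L * (|x - y| / a k)) : MemCmod ω (tentEnvelope h p) := by
  refine ⟨L * C, by positivity, fun x _ y _ => abs_ciSup_sub_ciSup_le
    (bddAbove_range_mul_tent hh hbdd x) (bddAbove_range_mul_tent hh hbdd y) fun k => ?_⟩
  have htent : |tent (p k x) - tent (p k y)| ≤ L * min 1 (|x - y| / a k) := by
    rw [mul_min_of_nonneg _ _ (by linarith), mul_one]
    exact le_min ((abs_tent_sub_tent_le_one _ _).trans hL)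
      ((abs_tent_sub_tent_le_abs _ _).trans (hp k x y))
  calc |h k * tent (p k x) - h k * tent (p k y)|
      = h k * |tent (p k x) - tent (p k y)| := by rw [← mul_sub, abs_mul, abs_of_nonneg (hh k)]
    _ ≤ C * ω (a k) * (L * min 1 (|x - y| / a k)) :=
        mul_le_mul (hhω k) htent (abs_nonneg _) ((hh k).trans (hhω k))
    _ = L * C * (min 1 (|x - y| / a k) * ω (a k)) := by ring
    _ ≤ L * C * ω |x - y| := by
        gcongr
        exact hω.min_one_div_mul_le (ha k) (abs_nonneg _)

end tentEnvelope

/-! ### Ergodic maximization -/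

lemma ergMax_nonpos_of_le_comp_sub {T f g : ℝ → ℝ} {B : ℝ} (hg : Measurable g)
    (hgB : ∀ x, |g x| ≤ B) (hfg : ∀ x ∈ Icc (0 : ℝ) 1, f x ≤ g (T x) - g x) :
    ergMax T f ≤ 0 := by
  refine Real.sSup_nonpos ?_
  rintro _ ⟨μ, ⟨hμ, hμ_Icc, hμT⟩, rfl⟩
  by_cases hf : Integrable f μ
  swap
  · exact (integral_undef hf).le
  have hT : AEMeasurable T μ := aemeasurable_of_map_neZero (by rw [hμT]; infer_instance)
  have hg_int : Integrable g μ := .of_bound hg.aestronglyMeasurable B (.of_forall hgB)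
  have hgT_int : Integrable (fun x => g (T x)) μ :=
    .of_bound (hg.comp_aemeasurable hT).aestronglyMeasurable B (.of_forall fun x => hgB (T x))
  have hmem : ∀ᵐ x ∂μ, x ∈ Icc (0 : ℝ) 1 := (mem_ae_iff_prob_eq_one measurableSet_Icc).2 hμ_Icc
  calc ∫ x, f x ∂μ ≤ ∫ x, (g (T x) - g x) ∂μ :=
        integral_mono_ae hf (hgT_int.sub hg_int) (hmem.mono hfg)
    _ = ∫ x, g x ∂μ.map T - ∫ x, g x ∂μ := by
        rw [integral_sub hgT_int hg_int, integral_map hT hg.aestronglyMeasurable]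
    _ = 0 := by rw [hμT, sub_self]

/-! ### Maps drifting through a family of charts -/

lemma tent_four_mul_add_three_eq_zero {q : ℝ} (hq : 1 ≤ |q|) : tent (4 * q + 3) = 0 := by
  refine tent_eq_zero ?_
  rw [le_abs] at hq ⊢
  rcases hq with hq | hq
  · left; linarith
  · right; linarith

lemma mul_tent_add_tent_le {K v q d : ℝ} (hv : 0 ≤ v) (hvd : v ≤ d) (hdK : d ≤ K * v)
    (hd : d ≤ 1 / 4) (hq : |q| ≤ 1) :
    v * tent (4 * q + 3) + tent q ≤ tent (q + d) + 4 * (K * v) * tent (q - 1 / 2) := by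
  have hpenalty : 0 ≤ 4 * (K * v) * tent (q - 1 / 2) :=
    mul_nonneg (by linarith) (tent_nonneg _)
  have hq_le := (abs_le.1 hq).2
  rcases le_total q (-1 / 4) with hq4 | hq4
  · have hrise : d + tent q ≤ tent (q + d) := by
      refine le_trans ?_ (one_sub_abs_le_tent _)
      rw [tent_eq_one_sub_abs hq, abs_of_nonpos (by linarith), abs_of_nonpos (by linarith)]
      linarith
    have hreward : v * tent (4 * q + 3) ≤ v := mul_le_of_le_one_right hv (tent_le_one _)
    linarith
  · have hreward : tent (4 * q + 3) = 0 :=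
      tent_eq_zero (by rw [abs_of_nonneg (by linarith)]; linarith)
    have hfall : tent q ≤ tent (q + d) + d := by
      have := (abs_le.1 (abs_tent_sub_tent_le_abs (q + d) q)).1
      rw [add_sub_cancel_left, abs_of_nonneg (hv.trans hvd)] at this
      linarith
    have hquarter : 1 / 4 ≤ tent (q - 1 / 2) := by
      have : |q - 1 / 2| ≤ 3 / 4 := abs_le.2 ⟨by linarith, by linarith⟩
      linarith [one_sub_abs_le_tent (q - 1 / 2)]
    have : 4 * (K * v) * (1 / 4) ≤ 4 * (K * v) * tent (q - 1 / 2) := by gcongr; linarith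
    rw [hreward, mul_zero]
    linarith

lemma iterate_gain {X : Type*} {T : X → X} {q u : X → ℝ} {l b ε η : ℝ} (hε : 0 ≤ ε)
    (hstep : ∀ x, q x ∈ Icc l b → q (T x) ∈ Icc (q x) (q x + ε) ∧ u x + η ≤ u (T x))
    {x₀ : X} (hx₀ : q x₀ = l) {n : ℕ} (hn : l + n * ε ≤ b) :
    q (T^[n] x₀) ∈ Icc l (l + n * ε) ∧ u x₀ + n * η ≤ u (T^[n] x₀) := by
  induction n with
  | zero => simp [hx₀]
  | succ n ih =>
    push_cast at hn ⊢
    obtain ⟨⟨hq_ge, hq_le⟩, hu⟩ := ih (by linarith)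
    obtain ⟨⟨hT_ge, hT_le⟩, huT⟩ := hstep (T^[n] x₀) ⟨hq_ge, by linarith⟩
    rw [Function.iterate_succ_apply']
    exact ⟨⟨hq_ge.trans hT_ge, by linarith⟩, by linarith⟩

/-- A family of charts `q k`, with disjoint domains `|q k x| < 3 / 2`, in which `T` moves to the
right: on `|q k x| ≤ 1` it advances by an amount between `v k` and `K * v k`. -/
structure DriftCharts {ι X : Type*} (T : X → X) (q : ι → X → ℝ) (v : ι → ℝ) (K : ℝ) : Prop where
  ratio_pos : 0 < K
  pos : ∀ k, 0 < v k
  small : ∀ k, K * v k ≤ 1 / 8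
  eq_of_mem : ∀ ⦃j k x⦄, |q j x| < 3 / 2 → |q k x| < 3 / 2 → j = k
  step_ge : ∀ ⦃k x⦄, |q k x| ≤ 1 → q k x + v k ≤ q k (T x)
  step_le : ∀ ⦃k x⦄, |q k x| ≤ 1 → q k (T x) ≤ q k x + K * v k

/-- The positive part of the observable, rewarding points in `-1 < q k x < -1 / 2`. -/
def driftReward {ι X : Type*} (q : ι → X → ℝ) (v : ι → ℝ) : X → ℝ :=
  tentEnvelope v fun k x => 4 * q k x + 3

/-- The negative part of the observable, penalizing points in `-1 / 2 < q k x < 3 / 2`. -/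
def driftPenalty {ι X : Type*} (q : ι → X → ℝ) (v : ι → ℝ) (K : ℝ) : X → ℝ :=
  tentEnvelope (fun k => 4 * (K * v k)) fun k x => q k x - 1 / 2

/-- The bounded function whose coboundary dominates the observable. -/
def driftPotential {ι X : Type*} (q : ι → X → ℝ) : X → ℝ :=
  tentEnvelope (fun _ => 1) q

/-- The observable without continuous sub-action. -/
def driftObservable {ι X : Type*} (q : ι → X → ℝ) (v : ι → ℝ) (K : ℝ) (x : X) : ℝ :=
  driftReward q v x - driftPenalty q v K x

lemma tent_le_driftPotential {ι X : Type*} (q : ι → X → ℝ) (k : ι) (x : X) :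
    tent (q k x) ≤ driftPotential q x := by
  rw [← one_mul (tent _)]
  exact le_tentEnvelope (fun _ => zero_le_one) ⟨1, forall_mem_range.2 fun _ => le_rfl⟩ k x

lemma abs_driftPotential_le_one {ι X : Type*} [Nonempty ι] (q : ι → X → ℝ) (x : X) :
    |driftPotential q x| ≤ 1 := by
  have hnonneg : 0 ≤ driftPotential q x :=
    Real.iSup_nonneg fun k => mul_nonneg zero_le_one (tent_nonneg _)
  rw [abs_of_nonneg hnonneg]
  exact ciSup_le fun k => (one_mul (tent (q k x))).trans_le (tent_le_one _)

namespace DriftCharts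

variable {ι X : Type*} {T : X → X} {q : ι → X → ℝ} {v : ι → ℝ} {K : ℝ}

lemma bddAbove_range (hq : DriftCharts T q v K) : BddAbove (range v) := by
  refine ⟨1 / 8 / K, forall_mem_range.2 fun k => ?_⟩
  rw [le_div_iff₀' hq.ratio_pos]
  exact hq.small k

lemma penalty_height_nonneg (hq : DriftCharts T q v K) (k : ι) : 0 ≤ 4 * (K * v k) :=
  mul_nonneg zero_le_four (mul_nonneg hq.ratio_pos.le (hq.pos k).le)

lemma bddAbove_range_penalty_height (hq : DriftCharts T q v K) :
    BddAbove (range fun k => 4 * (K * v k)) :=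
  ⟨4 * (1 / 8), forall_mem_range.2 fun k => by linarith [hq.small k]⟩

lemma mul_tent_le_driftReward (hq : DriftCharts T q v K) (k : ι) (x : X) :
    v k * tent (4 * q k x + 3) ≤ driftReward q v x :=
  le_tentEnvelope (p := fun k x => 4 * q k x + 3) (fun k => (hq.pos k).le) hq.bddAbove_range k x

lemma mul_tent_le_driftPenalty (hq : DriftCharts T q v K) (k : ι) (x : X) :
    4 * (K * v k) * tent (q k x - 1 / 2) ≤ driftPenalty q v K x :=
  le_tentEnvelope (p := fun k x => q k x - 1 / 2) hq.penalty_height_nonneg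
    hq.bddAbove_range_penalty_height k x

lemma le_abs_of_ne (hq : DriftCharts T q v K) {j k : ι} {x : X} (hjk : j ≠ k)
    (hk : |q k x| < 3 / 2) : 3 / 2 ≤ |q j x| :=
  not_lt.1 fun hj => hjk (hq.eq_of_mem hj hk)

lemma reward_add_potential_le (hq : DriftCharts T q v K) (k : ι) (x : X) :
    v k * tent (4 * q k x + 3) + tent (q k x) ≤
      tent (q k (T x)) + 4 * (K * v k) * tent (q k x - 1 / 2) := by
  rcases le_total |q k x| 1 with hx | hx
  · have hle := hq.step_le hx
    have := mul_tent_add_tent_le (K := K) (d := q k (T x) - q k x) (hq.pos k).le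
      (by linarith [hq.step_ge hx]) (by linarith) (by linarith [hq.small k]) hx
    rwa [add_sub_cancel] at this
  · rw [tent_four_mul_add_three_eq_zero hx, tent_eq_zero hx, mul_zero, add_zero]
    exact add_nonneg (tent_nonneg _)
      (mul_nonneg (hq.penalty_height_nonneg k) (tent_nonneg _))

lemma reward_add_potential_le_of_ne (hq : DriftCharts T q v K) {j k : ι} (hjk : j ≠ k) (x : X) :
    v j * tent (4 * q j x + 3) + tent (q k x) ≤
      max (v j * tent (4 * q j x + 3) + tent (q j x))
        (v k * tent (4 * q k x + 3) + tent (q k x)) := by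
  by_cases hk : |q k x| < 3 / 2
  · rw [tent_four_mul_add_three_eq_zero (by linarith [hq.le_abs_of_ne hjk hk]), mul_zero]
    exact le_max_of_le_right
      (add_le_add_left (mul_nonneg (hq.pos k).le (tent_nonneg _)) _)
  · rw [tent_eq_zero (by linarith : 1 ≤ |q k x|)]
    exact le_max_of_le_left (add_le_add_right (tent_nonneg _) _)

lemma driftObservable_le (hq : DriftCharts T q v K) [Nonempty ι] (x : X) :
    driftObservable q v K x ≤ driftPotential q (T x) - driftPotential q x := by
  have hdiag : ∀ k, v k * tent (4 * q k x + 3) + tent (q k x) ≤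
      driftPotential q (T x) + driftPenalty q v K x := fun k =>
    (hq.reward_add_potential_le k x).trans
      (add_le_add (tent_le_driftPotential q k (T x)) (hq.mul_tent_le_driftPenalty k x))
  have hsum : driftReward q v x + driftPotential q x ≤
      driftPotential q (T x) + driftPenalty q v K x := by
    refine ciSup_add_ciSup_le fun j k => ?_
    rw [one_mul]
    rcases eq_or_ne j k with rfl | hjk
    · exact hdiag j
    · exact (hq.reward_add_potential_le_of_ne hjk x).trans (max_le (hdiag j) (hdiag k))
  rw [driftObservable]
  linarith

lemma driftPenalty_eq_zero (hq : DriftCharts T q v K) {k : ι} {x : X}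
    (hx : q k x ∈ Icc (-1) (-1 / 2)) : driftPenalty q v K x = 0 := by
  have hmem : |q k x| < 3 / 2 := abs_lt.2 ⟨by linarith [hx.1], by linarith [hx.2]⟩
  have htent : ∀ j, tent (q j x - 1 / 2) = 0 := fun j => by
    refine tent_eq_zero (le_abs.2 ?_)
    rcases eq_or_ne j k with rfl | hjk
    · right; linarith [hx.2]
    · exact (le_abs.1 (hq.le_abs_of_ne hjk hmem)).imp (by intro; linarith) (by intro; linarith)
  simp only [driftPenalty, tentEnvelope, htent, mul_zero, Real.iSup_const_zero]

lemma half_le_driftObservable (hq : DriftCharts T q v K) {k : ι} {x : X}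
    (hx : q k x ∈ Icc (-7 / 8) (-5 / 8)) : v k / 2 ≤ driftObservable q v K x := by
  have hhalf : 1 / 2 ≤ tent (4 * q k x + 3) := by
    have : |4 * q k x + 3| ≤ 1 / 2 := abs_le.2 ⟨by linarith [hx.1], by linarith [hx.2]⟩
    linarith [one_sub_abs_le_tent (4 * q k x + 3)]
  rw [driftObservable, hq.driftPenalty_eq_zero ⟨by linarith [hx.1], by linarith [hx.2]⟩, sub_zero]
  calc v k / 2 = v k * (1 / 2) := by ring
    _ ≤ v k * tent (4 * q k x + 3) := mul_le_mul_of_nonneg_left hhalf (hq.pos k).le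
    _ ≤ driftReward q v x := hq.mul_tent_le_driftReward k x

/-- A step in the rewarding region moves by at most `K * v k` and gains at least `v k / 2`, so
the total gain along a crossing does not depend on `k`. -/
lemma exists_add_le (hq : DriftCharts T q v K) {k : ι} {u : X → ℝ}
    (hu : ∀ x, |q k x| ≤ 1 → driftObservable q v K x + u x - u (T x) ≤ 0)
    {x₀ : X} (hx₀ : q k x₀ = -7 / 8) : ∃ y, |q k y| ≤ 1 ∧ u x₀ + 1 / (16 * K) ≤ u y := by
  have hK := hq.ratio_pos
  have hv := hq.pos k
  have hKv : 0 < K * v k := mul_pos hK hv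
  set n := ⌊1 / 4 / (K * v k)⌋₊ with hn
  have hn_le : n * (K * v k) ≤ 1 / 4 :=
    (le_div_iff₀ hKv).1 (Nat.floor_le (by positivity))
  have hn_ge : 1 / 8 ≤ n * (K * v k) := by
    have := (div_lt_iff₀ hKv).1 (Nat.lt_floor_add_one (1 / 4 / (K * v k)))
    rw [← hn] at this
    linarith [hq.small k]
  have hstep : ∀ x, q k x ∈ Icc (-7 / 8) (-5 / 8) →
      q k (T x) ∈ Icc (q k x) (q k x + K * v k) ∧ u x + v k / 2 ≤ u (T x) := fun x hx => by
    have hx1 : |q k x| ≤ 1 := abs_le.2 ⟨by linarith [hx.1], by linarith [hx.2]⟩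
    exact ⟨⟨by linarith [hq.step_ge hx1], hq.step_le hx1⟩,
      by linarith [hu x hx1, hq.half_le_driftObservable hx]⟩
  obtain ⟨hmem, hgain⟩ := iterate_gain hKv.le hstep hx₀ (n := n) (by linarith)
  refine ⟨T^[n] x₀, abs_le.2 ⟨by linarith [hmem.1], by linarith [hmem.2]⟩, ?_⟩
  have : 1 / (16 * K) ≤ n * (v k / 2) := by
    rw [div_le_iff₀ (by positivity)]
    linarith
  linarith

lemma ergMax_driftObservable_nonpos {T : ℝ → ℝ} {q : ι → ℝ → ℝ} (hq : DriftCharts T q v K)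
    [Nonempty ι] [Countable ι] (hmeas : ∀ k, Measurable (q k)) :
    ergMax T (driftObservable q v K) ≤ 0 :=
  ergMax_nonpos_of_le_comp_sub (measurable_tentEnvelope hmeas) (abs_driftPotential_le_one q)
    fun x _ => hq.driftObservable_le x

lemma memCmod_driftObservable {T ω : ℝ → ℝ} {q : ι → ℝ → ℝ} (hq : DriftCharts T q v K)
    [Nonempty ι] (hω : ConcaveModulus ω) {a : ι → ℝ} {C L : ℝ} (hC : 0 < C) (hL : 1 ≤ L)
    (ha : ∀ k, 0 < a k) (hvω : ∀ k, v k ≤ C * ω (a k))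
    (hLip : ∀ k x y, |q k x - q k y| ≤ L * (|x - y| / a k)) :
    MemCmod ω (driftObservable q v K) := by
  have hK := hq.ratio_pos
  refine MemCmod.sub ?_ ?_
  · refine memCmod_tentEnvelope hω hC (by linarith : 1 ≤ 4 * L) ha (fun k => (hq.pos k).le)
      hq.bddAbove_range hvω fun k x y => ?_
    rw [add_sub_add_right_eq_sub, ← mul_sub, abs_mul, abs_of_pos four_pos, mul_assoc]
    gcongr
    exact hLip k x y
  · refine memCmod_tentEnvelope hω (by positivity : 0 < 4 * K * C) hL ha
      hq.penalty_height_nonneg hq.bddAbove_range_penalty_height (fun k => ?_) fun k x y => ?_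
    · rw [← mul_assoc, mul_assoc (4 * K)]
      gcongr
      exact hvω k
    · rw [sub_sub_sub_cancel_right]
      exact hLip k x y

end DriftCharts

/-! ### Charts near an indifferent fixed point -/

/-- The affine chart mapping `[a, 2a]` onto `[-1, 1]`, increasing if `s = 1` and decreasing if
`s = -1`, so that a map moving points in the direction `s` moves to the right in the chart. -/
def shellChart (s a x : ℝ) : ℝ := s * (2 * x / a - 3)

section shellChart

variable {s a x : ℝ}

lemma abs_shellChart (hs : |s| = 1) : |shellChart s a x| = |2 * x / a - 3| := by
  rw [shellChart, abs_mul, hs, one_mul]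

lemma abs_shellChart_le_one_iff (hs : |s| = 1) (ha : 0 < a) :
    |shellChart s a x| ≤ 1 ↔ x ∈ Icc a (2 * a) := by
  rw [abs_shellChart hs, abs_sub_le_iff, sub_le_iff_le_add, div_le_iff₀ ha, sub_le_comm,
    le_div_iff₀ ha, mem_Icc, and_comm]
  constructor <;> rintro ⟨h₁, h₂⟩ <;> constructor <;> linarith

lemma mem_Ioo_of_abs_shellChart_lt (hs : |s| = 1) (ha : 0 < a) (hx : |shellChart s a x| < 3 / 2) :
    x ∈ Ioo (3 / 4 * a) (9 / 4 * a) := by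
  rw [abs_shellChart hs, abs_sub_lt_iff, sub_lt_iff_lt_add, div_lt_iff₀ ha, sub_lt_comm,
    lt_div_iff₀ ha] at hx
  exact ⟨by linarith [hx.2], by linarith [hx.1]⟩

lemma abs_shellChart_sub (hs : |s| = 1) (ha : 0 < a) (y : ℝ) :
    |shellChart s a x - shellChart s a y| = 2 * (|x - y| / a) := by
  rw [shellChart, shellChart, ← mul_sub, abs_mul, hs, one_mul, sub_sub_sub_cancel_right,
    ← sub_div, ← mul_sub, abs_div, abs_mul, abs_two, abs_of_pos ha, mul_div_assoc]

lemma measurable_shellChart : Measurable (shellChart s a) := by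
  unfold shellChart
  fun_prop

lemma shellChart_surjective (hs : |s| = 1) (ha : 0 < a) :
    Function.Surjective (shellChart s a) := fun t => by
  refine ⟨a * (s * t + 3) / 2, ?_⟩
  have hss : s * s = 1 := by rw [← abs_mul_abs_self, hs, one_mul]
  unfold shellChart
  field_simp
  linear_combination t * hss

lemma shellChart_mul_one_add (hs : |s| = 1) (w : ℝ) :
    shellChart s a (x * (1 + s * w)) = shellChart s a x + 2 * (x / a) * w := by
  have hss : s * s = 1 := by rw [← abs_mul_abs_self, hs, one_mul]
  unfold shellChart
  linear_combination 2 * (x / a) * w * hss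

end shellChart

lemma driftCharts_shellChart {ι : Type*} [LinearOrder ι] {T V : ℝ → ℝ} {s M : ℝ} {a : ι → ℝ}
    (hs : |s| = 1) (hM : 0 < M) (ha : ∀ k, 0 < a k) (ha_lac : ∀ j k, j < k → 3 * a k ≤ a j)
    (hVpos : ∀ x > 0, 0 < V x) (hVmono : MonotoneOn V (Ioi 0))
    (hVdouble : ∀ k, V (2 * a k) ≤ M * V (a k)) (hVsmall : ∀ k, 4 * M * V (a k) ≤ 1 / 8)
    (hT : ∀ k, ∀ x ∈ Icc (a k) (2 * a k), T x = x * (1 + s * V x)) :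
    DriftCharts T (fun k => shellChart s (a k)) (fun k => V (a k)) (4 * M) := by
  have hlt_asymm : ∀ j k x, |shellChart s (a j) x| < 3 / 2 → |shellChart s (a k) x| < 3 / 2 →
      ¬ j < k := fun j k x hj hk hjk => by
    linarith [(mem_Ioo_of_abs_shellChart_lt hs (ha j) hj).1,
      (mem_Ioo_of_abs_shellChart_lt hs (ha k) hk).2, ha_lac j k hjk]
  have hstep : ∀ k x, |shellChart s (a k) x| ≤ 1 →
      shellChart s (a k) (T x) = shellChart s (a k) x + 2 * (x / a k) * V x ∧
        x / a k ∈ Icc 1 2 ∧ V x ∈ Icc (V (a k)) (M * V (a k)) := fun k x hx => by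
    rw [abs_shellChart_le_one_iff hs (ha k)] at hx
    have hx_pos : 0 < x := (ha k).trans_le hx.1
    refine ⟨?_, ⟨(one_le_div (ha k)).2 hx.1, (div_le_iff₀ (ha k)).2 hx.2⟩,
      hVmono (ha k) hx_pos hx.1, (hVmono hx_pos ?_ hx.2).trans (hVdouble k)⟩
    · rw [hT k x hx, shellChart_mul_one_add hs]
    · exact hx_pos.trans_le hx.2
  refine ⟨by positivity, fun k => hVpos _ (ha k), hVsmall, fun j k x hj hk => ?_,
    fun k x hx => ?_, fun k x hx => ?_⟩
  · exact le_antisymm (not_lt.1 (hlt_asymm k j x hk hj)) (not_lt.1 (hlt_asymm j k x hj hk))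
  · obtain ⟨hTx, hxa, hVx⟩ := hstep k x hx
    rw [hTx]
    nlinarith [hxa.1, hVx.1, hVpos _ (ha k)]
  · obtain ⟨hTx, hxa, hVx⟩ := hstep k x hx
    have : x / a k * V x ≤ 2 * (M * V (a k)) :=
      mul_le_mul hxa.2 hVx.2 ((hVpos _ (ha k)).le.trans hVx.1) zero_le_two
    rw [hTx]
    linarith

lemma exists_lacunary_seq {P : ℝ → Prop} (hP : ∀ᶠ x in 𝓝[>] 0, P x) :
    ∃ a : ℕ → ℝ, (∀ k, 0 < a k) ∧ (∀ j k, j < k → 3 * a k ≤ a j) ∧ Tendsto a atTop (𝓝 0) ∧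
      ∀ k, P (a k) := by
  obtain ⟨r, hr : 0 < r, hrP⟩ := mem_nhdsGT_iff_exists_Ioo_subset.1 hP
  have hpos : ∀ k : ℕ, 0 < r / 3 * (1 / 3) ^ k := fun k => by positivity
  have hanti : Antitone fun k : ℕ => r / 3 * (1 / 3 : ℝ) ^ k := fun j k hjk =>
    mul_le_mul_of_nonneg_left (pow_le_pow_of_le_one (by norm_num) (by norm_num) hjk) (by positivity)
  refine ⟨fun k => r / 3 * (1 / 3) ^ k, hpos, fun j k hjk => ?_, ?_, fun k => hrP ⟨hpos k, ?_⟩⟩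
  · have := hanti (Nat.succ_le_of_lt hjk)
    simp only [pow_succ] at this
    linarith
  · simpa using (tendsto_pow_atTop_nhds_zero_of_lt_one (by norm_num) (by norm_num :
      (1 / 3 : ℝ) < 1)).const_mul (r / 3)
  · have := hanti k.zero_le
    simp only [pow_zero] at this
    linarith

lemma eventually_forall_mem_Icc_two_mul {P : ℝ → Prop} (hP : ∀ᶠ x in 𝓝[>] 0, P x) :
    ∀ᶠ a in 𝓝[>] 0, ∀ x ∈ Icc a (2 * a), P x := by
  obtain ⟨r, hr : 0 < r, hrP⟩ := mem_nhdsGT_iff_exists_Ioo_subset.1 hP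
  filter_upwards [Ioo_mem_nhdsGT (half_pos hr)] with a ha x hx
  exact hrP ⟨ha.1.trans_le hx.1, by linarith [hx.2, ha.2]⟩

lemma not_continuousWithinAt_of_oscillation {u : ℝ → ℝ} {a : ℕ → ℝ} {c : ℝ} (hc : 0 < c)
    (ha : ∀ k, 0 < a k) (ha_one : ∀ k, 2 * a k ≤ 1) (ha_lim : Tendsto a atTop (𝓝 0))
    (hosc : ∀ k, ∃ x ∈ Icc (a k) (2 * a k), ∃ y ∈ Icc (a k) (2 * a k), u x + c ≤ u y) :
    ¬ ContinuousWithinAt u (Icc 0 1) 0 := by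
  intro hu
  choose x hx y hy hxy using hosc
  have hlim : ∀ z : ℕ → ℝ, (∀ k, z k ∈ Icc (a k) (2 * a k)) →
      Tendsto (u ∘ z) atTop (𝓝 (u 0)) := fun z hz => by
    refine hu.tendsto.comp (tendsto_nhdsWithin_iff.2 ⟨?_, .of_forall fun k => ?_⟩)
    · exact tendsto_of_tendsto_of_tendsto_of_le_of_le ha_lim (by simpa using ha_lim.const_mul 2)
        (fun k => (hz k).1) fun k => (hz k).2
    · exact ⟨(ha k).le.trans (hz k).1, (hz k).2.trans (ha_one k)⟩
  linarith [le_of_tendsto_of_tendsto' ((hlim x hx).add_const c) (hlim y hy) hxy]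

/-! ### Regular variation and the moduli `ω_{α,β}` -/

lemma isBigO_of_liminf_div_pos {X : Type*} {l : Filter X} {f g : X → ℝ}
    (hf : ∀ᶠ x in l, 0 ≤ f x) (hg : ∀ᶠ x in l, 0 < g x)
    (h : 0 < liminf (fun x => f x / g x) l) : g =O[l] f := by
  obtain ⟨c, hc, hcl⟩ := exists_between h
  have hbdd : IsBoundedUnder (· ≥ ·) l fun x => f x / g x :=
    isBoundedUnder_of_eventually_ge (a := 0)
      (by filter_upwards [hf, hg] with x hfx hgx using div_nonneg hfx hgx.le)
  refine .of_bound c⁻¹ ?_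
  filter_upwards [hf, hg, eventually_lt_of_lt_liminf hcl hbdd] with x hfx hgx hx
  rw [Real.norm_of_nonneg hfx, Real.norm_of_nonneg hgx.le, ← div_eq_inv_mul, le_div_iff₀' hc]
  exact ((lt_div_iff₀ hgx).1 hx).le

lemma RegVary0.isBigO {V : ℝ → ℝ} {σ : ℝ} (hV : RegVary0 V σ) (hVpos : ∀ x > 0, 0 < V x) {t : ℝ}
    (ht : 0 < t) : (fun x => V (t * x)) =O[𝓝[>] 0] V := by
  refine isBigO_of_div_tendsto_nhds ?_ (t ^ σ) (hV t ht)
  filter_upwards [self_mem_nhdsWithin] with x hx hVx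
  exact absurd hVx (hVpos x hx).ne'

lemma rpow_isBigO_omegaAB {σ α β h₀ : ℝ} (hh₀ : h₀ ∈ Ioo (0 : ℝ) 1)
    (hα : (α = σ ∧ β = 0) ∨ α < σ) :
    (fun x : ℝ => x ^ σ) =O[𝓝[>] 0] omegaAB α β h₀ := by
  have homega : (fun x => x ^ α * |log x| ^ (-β)) =ᶠ[𝓝[>] 0] omegaAB α β h₀ := by
    filter_upwards [Ioo_mem_nhdsGT hh₀.1] with x hx
    rw [omegaAB, if_neg hx.1.not_ge, if_pos hx.2, abs_of_neg (log_neg hx.1 (hx.2.trans hh₀.2))]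
  refine IsBigO.trans_eventuallyEq ?_ homega
  rcases hα with ⟨rfl, rfl⟩ | hα
  · simpa using isBigO_refl _ _
  have hlog := isLittleO_abs_log_rpow_rpow_nhdsGT_zero β (sub_neg.2 hα)
  refine ((isBigO_refl (fun x : ℝ => x ^ σ * |log x| ^ (-β)) _).mul hlog.isBigO).congr' ?_ ?_
  · filter_upwards [Ioo_mem_nhdsGT one_pos] with x hx
    have : 0 < |log x| := abs_pos.2 (log_neg hx.1 hx.2).ne
    rw [mul_assoc, ← rpow_add this, neg_add_cancel, rpow_zero, mul_one]
  · filter_upwards [self_mem_nhdsWithin] with x hx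
    rw [mul_right_comm, ← rpow_add hx, add_sub_cancel]

theorem no_continuous_subaction_omegaAB_general {T V ω : ℝ → ℝ} {s : ℝ} (hω : ConcaveModulus ω)
    (hVpos : ∀ x > 0, 0 < V x) (hVmono : MonotoneOn V (Ioi 0)) (hVω : V =O[𝓝[>] 0] ω)
    (hVdouble : (fun x => V (2 * x)) =O[𝓝[>] 0] V) (hs : |s| = 1)
    (hT : ∀ᶠ x in 𝓝[>] 0, T x = x * (1 + s * V x)) :
    ∃ f : ℝ → ℝ, MemCmod ω f ∧ ∀ u, IsSubaction T f u → ¬ ContinuousWithinAt u (Icc 0 1) 0 := by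
  obtain ⟨C, hC, hVω_le⟩ := hVω.exists_pos
  obtain ⟨M, hM, hVdouble_le⟩ := hVdouble.exists_pos
  have hVsmall : ∀ᶠ x in 𝓝[>] 0, V x < 1 / 8 / (4 * M) :=
    (hVω.trans_tendsto hω.tendsto_nhdsGT_zero).eventually_lt_const (by positivity)
  obtain ⟨a, ha, ha_lac, ha_lim, haP⟩ := exists_lacunary_seq
    (hVω_le.bound.and <| hVdouble_le.bound.and <| hVsmall.and <|
      (eventually_forall_mem_Icc_two_mul hT).and (Ioo_mem_nhdsGT one_half_pos))
  choose hVa hV2a hVa_small hTa ha_half using haP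
  have hcharts := driftCharts_shellChart hs hM ha ha_lac hVpos hVmono
    (fun k => by
      simpa only [Real.norm_of_nonneg (hVpos _ (ha k)).le] using (le_abs_self _).trans (hV2a k))
    (fun k => ((lt_div_iff₀' (by positivity)).1 (hVa_small k)).le) hTa
  have hV_le_omega : ∀ k, V (a k) ≤ C * ω (a k) := fun k => by
    simpa only [Real.norm_of_nonneg (hω.2.2.2.1 _ (ha k).le)] using (le_abs_self _).trans (hVa k)
  refine ⟨driftObservable (fun k => shellChart s (a k)) (fun k => V (a k)) (4 * M),
    hcharts.memCmod_driftObservable hω hC one_le_two ha hV_le_omega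
      fun k x y => (abs_shellChart_sub hs (ha k) y).le, fun u hu => ?_⟩
  have hergMax := hcharts.ergMax_driftObservable_nonpos fun _ => measurable_shellChart
  refine not_continuousWithinAt_of_oscillation (c := 1 / (16 * (4 * M))) (by positivity) ha
    (fun k => by linarith [(ha_half k).2]) ha_lim fun k => ?_
  have hchart_iff : ∀ x, |shellChart s (a k) x| ≤ 1 ↔ x ∈ Icc (a k) (2 * a k) :=
    fun _ => abs_shellChart_le_one_iff hs (ha k)
  have hunit : ∀ x, |shellChart s (a k) x| ≤ 1 → x ∈ Icc 0 1 := fun x hx =>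
    Icc_subset_Icc (ha k).le (by linarith [(ha_half k).2]) ((hchart_iff x).1 hx)
  obtain ⟨x, hx⟩ := shellChart_surjective hs (ha k) (-7 / 8)
  obtain ⟨y, hy, hxy⟩ :=
    hcharts.exists_add_le (fun z hz => (hu z (hunit z hz)).trans hergMax) hx
  exact ⟨x, (hchart_iff x).1 (by rw [hx]; norm_num [abs_of_neg]), y, (hchart_iff y).1 hy, hxy⟩

theorem no_continuous_subaction_omegaAB
    (T V : ℝ → ℝ) (σ : ℝ) (hσ : 0 < σ)
    (hT : MapsTo T (Icc 0 1) (Icc 0 1))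
    (hVcont : ContinuousOn V (Ici 0)) (hVmono : StrictMonoOn V (Ici 0))
    (hVrange : ∀ x > (0:ℝ), V x ∈ Ioo (0:ℝ) 1)
    (hVreg : RegVary0 V σ)
    (hloc : ∃ ε > (0:ℝ), InjOn T (Ico 0 ε) ∧
      ((∀ x ∈ Ico (0:ℝ) ε, T x = x * (1 + V x)) ∨
       (∀ x ∈ Ico (0:ℝ) ε, T x = x * (1 - V x))))
    (hliminf : 0 < Filter.liminf (fun x => x ^ σ / V x) (𝓝[>] 0))
    (α β h₀ : ℝ) (hh₀ : h₀ ∈ Ioo (0:ℝ) 1)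
    (hconc : ConcaveModulus (omegaAB α β h₀))
    (hαβ : (α = σ ∧ β = 0) ∨ (0 ≤ α ∧ α < min σ 1 ∧ 0 ≤ β ∧ 0 < α + β)) :
    ∃ f : ℝ → ℝ, MemCmod (omegaAB α β h₀) f ∧
      ¬ ∃ u : ℝ → ℝ, ContinuousOn u (Icc 0 1) ∧ IsSubaction T f u := by
  obtain ⟨ε, hε, -, hform⟩ := hloc
  obtain ⟨s, hs, hTs⟩ : ∃ s : ℝ, |s| = 1 ∧ ∀ x ∈ Ico (0 : ℝ) ε, T x = x * (1 + s * V x) :=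
    hform.elim (fun h => ⟨1, by simpa using h⟩) fun h => ⟨-1, by simpa [← sub_eq_add_neg] using h⟩
  have hVpos : ∀ x > 0, 0 < V x := fun x hx => (hVrange x hx).1
  have hVσ : V =O[𝓝[>] 0] fun x => x ^ σ := isBigO_of_liminf_div_pos
    (eventually_nhdsWithin_of_forall fun x hx => rpow_nonneg (le_of_lt hx) σ)
    (eventually_nhdsWithin_of_forall hVpos) hliminf
  have hσω : (fun x : ℝ => x ^ σ) =O[𝓝[>] 0] omegaAB α β h₀ := rpow_isBigO_omegaAB hh₀
    (hαβ.imp_right fun h => h.2.1.trans_le (min_le_left _ _))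
  obtain ⟨f, hf, hu⟩ := no_continuous_subaction_omegaAB_general hconc hVpos
    (hVmono.monotoneOn.mono Ioi_subset_Ici_self) (hVσ.trans hσω) (hVreg.isBigO hVpos two_pos) hs
    (by filter_upwards [Ioo_mem_nhdsGT hε] with x hx using hTs x ⟨hx.1.le, hx.2⟩)
  exact ⟨f, hf, fun ⟨u, hucont, husub⟩ => hu u husub (hucont 0 (by simp))⟩

end
end

section
/- For ρ ∈ (0,1], let F_ρ : [0,1] → [0,1] satisfy F_ρ(x) = x/(1 − x^ρ)^{1/ρ} for x close to 0 (a generalized Farey map, with Farey map at ρ = 1), and let G_ρ be its first inverse branch, G_ρ(x) = x/(1 + x^ρ)^{1/ρ}. Let ω_{α,β} be the concave modulus with ω_{α,β}(h) = h^α(−log h)^{−β} for small h > 0, where either α ∈ [0,ρ) and β ≥ 0 with α + β > 0, or α = ρ and β = 0. Then there exist functions f, g ∈ C^{ω_{α,β}}([0,1]) which do not admit continuous sub-actions with respect to F_ρ and G_ρ, respectively. -/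
open MeasureTheory Set Filter Topology Real

noncomputable section

open scoped NNReal

/-!
In the coordinate `y = x ^ ρ` both branches are `y ↦ y / (1 + σ y)` near `0`, with `σ = -1` for
`F_ρ` and `σ = 1` for `G_ρ`. The function `v x = sin (log (x ^ ρ))` is bounded and has no limit at
`0`, yet `v ∘ T - v` is Lipschitz in `y`, because one step only moves `log y` by
`log (1 + σ y) = O(y)`. Let `f` be Lipschitz in `y`, equal to `v ∘ T - v` near `0` and below it
everywhere. Then `v` is a bounded measurable sub-action for the constant `f 0 = 0`, which the point
mass at `0` attains, so `m(f, T) = 0`. For any sub-action `u` continuous at `0`, the bounded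
function `u - v` is monotone along orbits near `0`, hence converges along them, and so does `v`. But
in the coordinate `t = 1 / y` the map is `t ↦ t + σ`, and `v = -sin (log t)` does not converge along
`t = |σ| n`.
-/

section ModulusOfContinuity

lemma MemCmod.mono {ω₁ ω₂ f : ℝ → ℝ} {C : ℝ} (hf : MemCmod ω₁ f) (hC : 0 < C)
    (hω : ∀ h ∈ Icc (0 : ℝ) 1, ω₁ h ≤ C * ω₂ h) : MemCmod ω₂ f := by
  obtain ⟨K, hK, hf⟩ := hf
  refine ⟨K * C, by positivity, fun x hx y hy => ?_⟩
  have hxy : |x - y| ≤ 1 := by simpa using abs_sub_le_of_le_of_le hx.1 hx.2 hy.1 hy.2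
  calc |f x - f y| ≤ K * ω₁ |x - y| := hf x hx y hy
    _ ≤ K * (C * ω₂ |x - y|) := by gcongr; exact hω _ ⟨abs_nonneg _, hxy⟩
    _ = K * C * ω₂ |x - y| := (mul_assoc _ _ _).symm

lemma abs_rpow_sub_rpow_le {p x y : ℝ} (hp₀ : 0 ≤ p) (hp₁ : p ≤ 1) (hx : 0 ≤ x) (hy : 0 ≤ y) :
    |x ^ p - y ^ p| ≤ |x - y| ^ p := by
  wlog hxy : y ≤ x generalizing x y
  · simpa only [abs_sub_comm] using this hy hx (le_of_not_ge hxy)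
  have hsub : x ^ p ≤ y ^ p + (x - y) ^ p := by
    simpa using rpow_add_le_add_rpow hy (sub_nonneg.2 hxy) hp₀ hp₁
  rw [abs_of_nonneg (sub_nonneg.2 (rpow_le_rpow hy hxy hp₀)), abs_of_nonneg (sub_nonneg.2 hxy)]
  linarith

lemma memCmod_rpow_comp_rpow {ρ : ℝ} (hρ : ρ ∈ Ioc (0 : ℝ) 1) {g : ℝ → ℝ} {K : ℝ≥0}
    (hg : LipschitzOnWith K g (Ici 0)) : MemCmod (fun h => h ^ ρ) fun x => g (x ^ ρ) := by
  refine ⟨K + 1, by positivity, fun x hx y hy => ?_⟩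
  calc |g (x ^ ρ) - g (y ^ ρ)| ≤ K * |x ^ ρ - y ^ ρ| :=
        hg.dist_le_mul _ (rpow_nonneg hx.1 _) _ (rpow_nonneg hy.1 _)
    _ ≤ (K + 1) * |x - y| ^ ρ := by
        gcongr
        · exact le_add_of_nonneg_right zero_le_one
        · exact abs_rpow_sub_rpow_le hρ.1.le hρ.2 hx.1 hy.1

lemma omegaAB_of_pos {α β h₀ h : ℝ} (hh : 0 < h) :
    omegaAB α β h₀ h = min h h₀ ^ α * (-log (min h h₀)) ^ (-β) := by
  unfold omegaAB
  rw [if_neg hh.not_ge]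
  split_ifs with hlt
  · rw [min_eq_left hlt.le]
  · rw [min_eq_right (not_lt.1 hlt)]

lemma exists_rpow_le_mul_rpow_mul_neg_log_rpow {ρ α β : ℝ} (hβ : 0 ≤ β)
    (hα : α < ρ ∨ α = ρ ∧ β = 0) :
    ∃ C > 0, ∀ h ∈ Ioo (0 : ℝ) 1, h ^ ρ ≤ C * (h ^ α * (-log h) ^ (-β)) := by
  obtain hα | ⟨rfl, rfl⟩ := hα
  swap
  · exact ⟨1, one_pos, fun h _ => by simp⟩
  set t : ℝ := (ρ - α) / (β + 1)
  have ht : 0 < t := div_pos (sub_pos.2 hα) (by positivity)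
  have htβ : t * β ≤ ρ - α := by
    have : t * (β + 1) = ρ - α := div_mul_cancel₀ _ (by positivity)
    linarith
  refine ⟨(1 / t) ^ β, by positivity, fun h hh => ?_⟩
  have hh₀ : 0 < h := hh.1
  have hlog : 0 < -log h := neg_pos.2 (log_neg hh.1 hh.2)
  have hlogβ : h ^ (ρ - α) * (-log h) ^ β ≤ (1 / t) ^ β :=
    calc h ^ (ρ - α) * (-log h) ^ β ≤ h ^ (t * β) * (-log h) ^ β := by
          gcongr ?_ * _
          exact rpow_le_rpow_of_exponent_ge hh.1 hh.2.le htβ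
      _ = (h ^ t * -log h) ^ β := by
          rw [rpow_mul hh₀.le, mul_rpow (by positivity) hlog.le]
      _ ≤ (1 / t) ^ β := by
          gcongr
          have := (abs_lt.1 (abs_log_mul_self_rpow_lt h t hh.1 hh.2.le ht)).1
          linarith
  calc h ^ ρ = h ^ (ρ - α) * h ^ α := by rw [← rpow_add hh.1, sub_add_cancel]
    _ ≤ (1 / t) ^ β / (-log h) ^ β * h ^ α := by
        gcongr
        rwa [le_div_iff₀ (by positivity)]
    _ = (1 / t) ^ β * (h ^ α * (-log h) ^ (-β)) := by rw [rpow_neg hlog.le]; ring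

lemma exists_rpow_le_mul_omegaAB {ρ α β h₀ : ℝ} (hρ : 0 < ρ) (hh₀ : h₀ ∈ Ioo (0 : ℝ) 1)
    (hβ : 0 ≤ β) (hα : α < ρ ∨ α = ρ ∧ β = 0) :
    ∃ C > 0, ∀ h ∈ Icc (0 : ℝ) 1, h ^ ρ ≤ C * omegaAB α β h₀ h := by
  obtain ⟨C, hC, hbound⟩ := exists_rpow_le_mul_rpow_mul_neg_log_rpow hβ hα
  have hh₀ρ : 0 < h₀ ^ ρ := rpow_pos_of_pos hh₀.1 ρ
  refine ⟨C / h₀ ^ ρ, by positivity, fun h hh => ?_⟩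
  obtain rfl | hpos := hh.1.eq_or_lt
  · simp [omegaAB, hρ.ne']
  have hmin : h * h₀ ≤ min h h₀ :=
    le_min (mul_le_of_le_one_right hh.1 hh₀.2.le) (mul_le_of_le_one_left hh₀.1.le hh.2)
  rw [omegaAB_of_pos hpos, div_mul_eq_mul_div, le_div_iff₀ hh₀ρ, ← mul_rpow hh.1 hh₀.1.le]
  calc (h * h₀) ^ ρ ≤ min h h₀ ^ ρ := by
        gcongr
        exact mul_nonneg hh.1 hh₀.1.le
    _ ≤ C * (min h h₀ ^ α * (-log (min h h₀)) ^ (-β)) :=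
        hbound _ ⟨lt_min hpos hh₀.1, min_lt_of_right_lt hh₀.2⟩

end ModulusOfContinuity

section InvariantMeasures

variable {T f v : ℝ → ℝ} {μ : Measure ℝ}

namespace InvariantProb

lemma aemeasurable (hμ : InvariantProb T μ) : AEMeasurable T μ := by
  obtain ⟨_, _, hmap⟩ := hμ
  by_contra hT
  rw [Measure.map_of_not_aemeasurable hT] at hmap
  exact IsProbabilityMeasure.ne_zero μ hmap.symm

lemma ae_mem_Icc (hμ : InvariantProb T μ) : ∀ᵐ x ∂μ, x ∈ Icc (0 : ℝ) 1 :=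
  have := hμ.1
  (mem_ae_iff_prob_eq_one measurableSet_Icc).2 hμ.2.1

lemma integrable (hμ : InvariantProb T μ) (hf : ContinuousOn f (Icc 0 1)) : Integrable f μ := by
  have := hμ.1
  rw [← Measure.restrict_eq_self_of_ae_mem hμ.ae_mem_Icc]
  exact hf.integrableOn_compact isCompact_Icc

lemma integral_le (hμ : InvariantProb T μ) (hf : Integrable f μ) (hv : Measurable v) {B c : ℝ}
    (hvB : ∀ x, |v x| ≤ B) (h : ∀ x ∈ Icc (0 : ℝ) 1, f x + v x - v (T x) ≤ c) :
    ∫ x, f x ∂μ ≤ c := by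
  have := hμ.1
  have hvi : Integrable v μ := .of_bound hv.aestronglyMeasurable B (.of_forall hvB)
  have hvTi : Integrable (fun x => v (T x)) μ :=
    .of_bound (hv.comp_aemeasurable hμ.aemeasurable).aestronglyMeasurable B
      (.of_forall fun x => hvB (T x))
  have hinv : ∫ x, v (T x) ∂μ = ∫ x, v x ∂μ := by
    rw [← integral_map hμ.aemeasurable hv.aestronglyMeasurable, hμ.2.2]
  calc ∫ x, f x ∂μ = ∫ x, (f x + v x - v (T x)) ∂μ := by
        rw [integral_sub (by exact hf.add hvi) hvTi, integral_add hf hvi, hinv,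
          add_sub_cancel_right]
    _ ≤ ∫ _, c ∂μ := integral_mono_ae ((hf.add hvi).sub hvTi) (integrable_const c)
        (hμ.ae_mem_Icc.mono h)
    _ = c := by simp

end InvariantProb

lemma invariantProb_dirac {p : ℝ} (hp : p ∈ Icc (0 : ℝ) 1) (hT : T p = p) :
    InvariantProb T (Measure.dirac p) := by
  have hconst : T =ᵐ[Measure.dirac p] fun _ => p := by
    rwa [EventuallyEq, ae_dirac_eq, eventually_pure]
  refine ⟨inferInstance, by simp [hp], ?_⟩
  rw [Measure.map_congr hconst, Measure.map_const, measure_univ, one_smul]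

lemma ergMax_eq_of_fixedPoint {p : ℝ} (hp : p ∈ Icc (0 : ℝ) 1) (hT : T p = p)
    (hf : ContinuousOn f (Icc 0 1)) (hv : Measurable v) {B : ℝ} (hvB : ∀ x, |v x| ≤ B)
    (h : ∀ x ∈ Icc (0 : ℝ) 1, f x + v x - v (T x) ≤ f p) : ergMax T f = f p := by
  refine IsGreatest.csSup_eq ⟨⟨_, invariantProb_dirac hp hT, (integral_dirac f p).symm⟩, ?_⟩
  rintro _ ⟨μ, hμ, rfl⟩
  exact hμ.integral_le (hμ.integrable hf) hv hvB h

end InvariantMeasures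

section Limits

lemma exists_tendsto_of_eventually_le_succ {a : ℕ → ℝ} {B : ℝ}
    (ha : ∀ᶠ n in atTop, a n ≤ a (n + 1)) (hB : ∀ᶠ n in atTop, a n ≤ B) :
    ∃ l, Tendsto a atTop (𝓝 l) := by
  obtain ⟨N, hN⟩ := eventually_atTop.1 ha
  have hmono : Monotone fun n => a (n + N) := monotone_nat_of_le_succ fun n => by
    simpa only [add_right_comm] using hN (n + N) (Nat.le_add_left N n)
  obtain htop | ⟨l, hl⟩ := tendsto_atTop_of_monotone hmono
  · exact absurd ⟨B, (tendsto_add_atTop_nat N).eventually hB⟩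
      (not_isBoundedUnder_of_tendsto_atTop htop)
  · exact ⟨l, (tendsto_add_atTop_iff_nat N).1 hl⟩

lemma exists_tendsto_of_eventually_le_comp_add {w : ℝ → ℝ} {σ B : ℝ} (hσ : σ ≠ 0)
    (hw : ∀ᶠ t in atTop, w t ≤ w (t + σ)) (hB : ∀ᶠ t in atTop, |w t| ≤ B) :
    ∃ l, Tendsto (fun n : ℕ => w (|σ| * n)) atTop (𝓝 l) := by
  have htop : Tendsto (fun n : ℕ => |σ| * n) atTop atTop :=
    tendsto_natCast_atTop_atTop.const_mul_atTop (abs_pos.2 hσ)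
  have hBn : ∀ᶠ n : ℕ in atTop, |w (|σ| * n)| ≤ B := htop.eventually hB
  obtain hneg | hpos := hσ.lt_or_gt
  · have hanti : ∀ᶠ n : ℕ in atTop, -w (|σ| * n) ≤ -w (|σ| * (n + 1 : ℕ)) := by
      filter_upwards [(htop.comp (tendsto_add_atTop_nat 1)).eventually hw] with n hn
      have hback : |σ| * (n + 1 : ℕ) + σ = |σ| * n := by
        rw [abs_of_neg hneg]
        push_cast
        ring
      rw [Function.comp_apply, hback] at hn
      exact neg_le_neg hn
    obtain ⟨l, hl⟩ := exists_tendsto_of_eventually_le_succ hanti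
      (hBn.mono fun _ hn => (neg_le_abs _).trans hn)
    exact ⟨-l, by simpa using hl.neg⟩
  · have hmono : ∀ᶠ n : ℕ in atTop, w (|σ| * n) ≤ w (|σ| * (n + 1 : ℕ)) := by
      filter_upwards [htop.eventually hw] with n hn
      simpa only [abs_of_pos hpos, Nat.cast_add_one, mul_add_one] using hn
    exact exists_tendsto_of_eventually_le_succ hmono
      (hBn.mono fun _ hn => (le_abs_self _).trans hn)

/- If `sin a ≠ 0`, the sum-to-product formulas give `l = l * cos a`, so that `sin θ → 0`, and
`cos θ * sin a → 0`, so that `cos θ → 0`. -/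
lemma sin_eq_zero_of_tendsto_sin_translates {ι : Type*} {F : Filter ι} [F.NeBot] {θ : ι → ℝ}
    {a l : ℝ} (hθ : Tendsto (fun i => sin (θ i)) F (𝓝 l))
    (hsub : Tendsto (fun i => sin (θ i - a)) F (𝓝 l))
    (hadd : Tendsto (fun i => sin (θ i + a)) F (𝓝 l)) : sin a = 0 := by
  by_contra hsin
  have hcos_ne : 1 - cos a ≠ 0 := fun h => hsin (by nlinarith [sin_sq_add_cos_sq a])
  have hl : l = 0 := by
    have hlim : l + l = 2 * l * cos a := by
      refine tendsto_nhds_unique (hadd.add hsub)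
        (((hθ.const_mul 2).mul_const (cos a)).congr fun i => ?_)
      rw [sin_add, sin_sub]
      ring
    exact (mul_eq_zero.1 (by linarith : l * (1 - cos a) = 0)).resolve_right hcos_ne
  have hcos : Tendsto (fun i => cos (θ i)) F (𝓝 0) := by
    have hlim : Tendsto (fun i => (sin (θ i + a) - sin (θ i - a)) / (2 * sin a)) F (𝓝 0) := by
      simpa using (hadd.sub hsub).div_const (2 * sin a)
    refine hlim.congr fun i => ?_
    rw [sin_add, sin_sub]
    field_simp
    ring
  have hone : l ^ 2 + 0 ^ 2 = 1 :=
    tendsto_nhds_unique ((hθ.pow 2).add (hcos.pow 2)) (by simp)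
  simp [hl] at hone

lemma not_tendsto_sin_log_mul_natCast {c : ℝ} (hc : c ≠ 0) (l : ℝ) :
    ¬ Tendsto (fun n : ℕ => sin (log (c * n))) atTop (𝓝 l) := by
  intro hl
  have hdouble : Tendsto (fun n : ℕ => 2 * n) atTop atTop :=
    tendsto_id.const_mul_atTop' two_pos
  have hlog {n : ℕ} (hn : 0 < n) : log (c * (2 * n : ℕ)) = log (c * n) + log 2 := by
    rw [← log_mul (by positivity) two_ne_zero]
    push_cast
    ring_nf
  have hθ : Tendsto (fun n : ℕ => sin (log (c * (2 * n : ℕ)))) atTop (𝓝 l) := hl.comp hdouble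
  have hsub : Tendsto (fun n : ℕ => sin (log (c * (2 * n : ℕ)) - log 2)) atTop (𝓝 l) := by
    refine hl.congr' ?_
    filter_upwards [eventually_gt_atTop 0] with n hn
    rw [hlog hn, add_sub_cancel_right]
  have hadd : Tendsto (fun n : ℕ => sin (log (c * (2 * n : ℕ)) + log 2)) atTop (𝓝 l) := by
    refine (hθ.comp hdouble).congr' ?_
    filter_upwards [eventually_gt_atTop 0] with n hn
    exact congrArg sin (hlog (by positivity))
  have hsin : 0 < sin (log 2) :=
    sin_pos_of_mem_Ioo ⟨log_pos one_lt_two, by linarith [log_two_lt_d9, pi_gt_three]⟩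
  exact hsin.ne' (sin_eq_zero_of_tendsto_sin_translates hθ hsub hadd)

end Limits

section FareyBranch

/-- The map `x ↦ x / (1 + σ x ^ ρ) ^ (1 / ρ)`, conjugate to `y ↦ y / (1 + σ y)` through
`y = x ^ ρ`. It is `G_ρ` for `σ = 1` and the germ of `F_ρ` at `0` for `σ = -1`. -/
def fareyBranch (ρ σ x : ℝ) : ℝ := x / (1 + σ * x ^ ρ) ^ (1 / ρ)

/-- The bounded transfer function, oscillating at `0`, of the coboundary used as potential. -/
def sinLogRpow (ρ x : ℝ) : ℝ := sin (log (x ^ ρ))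

/-- The coboundary of `sinLogRpow ρ` under `fareyBranch ρ σ`, in the coordinate `y = x ^ ρ`. -/
def sinLogCoboundary (σ y : ℝ) : ℝ := sin (log (y / (1 + σ * y))) - sin (log y)

/-- The point `x` with `x ^ (-ρ) = t`; in the coordinate `t`, `fareyBranch ρ σ` is the translation
by `σ`. -/
def invRoot (ρ t : ℝ) : ℝ := t⁻¹ ^ (1 / ρ)

variable {ρ σ : ℝ}

lemma tendsto_rpow_nhdsGE_zero {p : ℝ} (hp : 0 < p) :
    Tendsto (fun x : ℝ => x ^ p) (𝓝[≥] 0) (𝓝[≥] 0) := by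
  refine tendsto_nhdsWithin_iff.2 ⟨?_, ?_⟩
  · exact ((continuous_rpow_const hp.le).tendsto' 0 0 (zero_rpow hp.ne')).mono_left
      nhdsWithin_le_nhds
  · filter_upwards [self_mem_nhdsWithin] with x hx
    exact rpow_nonneg hx p

lemma fareyBranch_rpow (hρ : ρ ≠ 0) {x : ℝ} (hx : 0 ≤ x) (hσx : 0 ≤ 1 + σ * x ^ ρ) :
    fareyBranch ρ σ x ^ ρ = x ^ ρ / (1 + σ * x ^ ρ) := by
  rw [fareyBranch, div_rpow hx (rpow_nonneg hσx _), ← rpow_mul hσx, one_div_mul_cancel hρ, rpow_one]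

lemma invRoot_rpow (hρ : ρ ≠ 0) {t : ℝ} (ht : 0 ≤ t) : invRoot ρ t ^ ρ = t⁻¹ := by
  rw [invRoot, ← rpow_mul (inv_nonneg.2 ht), one_div_mul_cancel hρ, rpow_one]

lemma fareyBranch_invRoot (hρ : ρ ≠ 0) {t : ℝ} (ht : 0 < t) (htσ : 0 ≤ t + σ) :
    fareyBranch ρ σ (invRoot ρ t) = invRoot ρ (t + σ) := by
  have hden : 1 + σ * t⁻¹ = (t + σ) / t := by field_simp
  rw [fareyBranch, invRoot_rpow hρ ht.le, hden, invRoot, invRoot,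
    ← div_rpow (by positivity) (by positivity), inv_div_left, div_mul_cancel₀ _ ht.ne']

lemma sinLogRpow_invRoot (hρ : ρ ≠ 0) {t : ℝ} (ht : 0 ≤ t) :
    sinLogRpow ρ (invRoot ρ t) = -sin (log t) := by
  rw [sinLogRpow, invRoot_rpow hρ ht, log_inv, sin_neg]

lemma tendsto_invRoot_atTop (hρ : 0 < ρ) : Tendsto (invRoot ρ) atTop (𝓝[≥] 0) :=
  (tendsto_rpow_nhdsGE_zero (one_div_pos.2 hρ)).comp
    (tendsto_inv_atTop_nhdsGT_zero.mono_right (nhdsWithin_mono 0 Ioi_subset_Ici_self))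

lemma abs_sinLogRpow_le (ρ x : ℝ) : |sinLogRpow ρ x| ≤ 1 := abs_sin_le_one _

lemma measurable_sinLogRpow (ρ : ℝ) : Measurable (sinLogRpow ρ) := by
  unfold sinLogRpow
  fun_prop

lemma sinLogCoboundary_rpow (hρ : ρ ≠ 0) {x : ℝ} (hx : 0 ≤ x) (hσx : 0 ≤ 1 + σ * x ^ ρ) :
    sinLogCoboundary σ (x ^ ρ) = sinLogRpow ρ (fareyBranch ρ σ x) - sinLogRpow ρ x := by
  rw [sinLogCoboundary, sinLogRpow, sinLogRpow, fareyBranch_rpow hρ hx hσx]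

end FareyBranch

section LipschitzPotential

lemma abs_log_one_add_le {t : ℝ} (ht : |t| ≤ 1 / 2) : |log (1 + t)| ≤ 2 * |t| := by
  obtain ⟨hlo, -⟩ := abs_le.1 ht
  have hpos : 0 < 1 + t := by linarith
  have hlower : -(2 * |t|) ≤ 1 - (1 + t)⁻¹ := by
    have hquot : 1 - (1 + t)⁻¹ = t / (1 + t) := by field_simp; ring
    rw [hquot, le_div_iff₀ hpos]
    nlinarith [neg_abs_le t, abs_nonneg t]
  refine abs_le.2 ⟨hlower.trans (one_sub_inv_le_log_of_pos hpos), ?_⟩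
  linarith [log_le_sub_one_of_pos hpos, le_abs_self t, abs_nonneg t]

variable {σ y b : ℝ}

lemma half_le_one_add_mul (hy : 0 ≤ y) (hσy : |σ| * y ≤ 1 / 2) : 1 / 2 ≤ 1 + σ * y := by
  nlinarith [neg_abs_le σ]

lemma abs_log_div_one_add_mul_sub_log_le (hy : 0 ≤ y) (hσy : |σ| * y ≤ 1 / 2) :
    |log (y / (1 + σ * y)) - log y| ≤ 2 * |σ| * y := by
  obtain rfl | hpos := hy.eq_or_lt
  · simp
  have habs : |σ * y| = |σ| * y := by rw [abs_mul, abs_of_nonneg hy]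
  have hden : 1 + σ * y ≠ 0 := by linarith [half_le_one_add_mul hy hσy]
  rw [log_div hpos.ne' hden, sub_sub_cancel_left, abs_neg, mul_assoc, ← habs]
  exact abs_log_one_add_le (habs.trans_le hσy)

lemma hasDerivAt_sinLogCoboundary (hy : y ≠ 0) (hσy : 1 + σ * y ≠ 0) :
    HasDerivAt (sinLogCoboundary σ)
      ((cos (log (y / (1 + σ * y))) - cos (log y)) / y
        - cos (log (y / (1 + σ * y))) * (σ / (1 + σ * y))) y := by
  have hden : HasDerivAt (fun y => 1 + σ * y) σ y := by
    simpa using ((hasDerivAt_id y).const_mul σ).const_add 1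
  have hlog := ((hasDerivAt_id y).div hden hσy).log (div_ne_zero hy hσy)
  refine (hlog.sin.sub (hasDerivAt_log hy).sin).congr_deriv ?_
  simp only [id_eq, Pi.div_apply]
  generalize cos (log (y / (1 + σ * y))) = c
  field_simp
  ring

lemma abs_sinLogCoboundary_le (hy : 0 ≤ y) (hσy : |σ| * y ≤ 1 / 2) :
    |sinLogCoboundary σ y| ≤ 2 * |σ| * y :=
  (abs_sin_sub_sin_le _ _).trans (abs_log_div_one_add_mul_sub_log_le hy hσy)

lemma continuousOn_sinLogCoboundary (hb : |σ| * b ≤ 1 / 2) :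
    ContinuousOn (sinLogCoboundary σ) (Icc 0 b) := by
  have hσ {y : ℝ} (hy : y ∈ Icc 0 b) : |σ| * y ≤ 1 / 2 :=
    (mul_le_mul_of_nonneg_left hy.2 (abs_nonneg σ)).trans hb
  intro y hy
  obtain rfl | hpos := hy.1.eq_or_lt
  · have hzero : sinLogCoboundary σ 0 = 0 := by simp [sinLogCoboundary]
    rw [ContinuousWithinAt, hzero]
    refine squeeze_zero_norm' (a := fun y => 2 * |σ| * y) ?_ ?_
    · filter_upwards [self_mem_nhdsWithin] with y hy
      exact abs_sinLogCoboundary_le hy.1 (hσ hy)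
    · exact (Continuous.tendsto' (by fun_prop) 0 0 (mul_zero _)).mono_left nhdsWithin_le_nhds
  · have hden : 1 + σ * y ≠ 0 := by linarith [half_le_one_add_mul hy.1 (hσ hy)]
    exact (hasDerivAt_sinLogCoboundary hpos.ne' hden).continuousAt.continuousWithinAt

lemma lipschitzOnWith_sinLogCoboundary (hb₀ : 0 < b) (hb : |σ| * b ≤ 1 / 2) :
    LipschitzOnWith (4 * ‖σ‖₊) (sinLogCoboundary σ) (Icc 0 b) := by
  rw [← closure_Ioo hb₀.ne]
  refine LipschitzOnWith.closure ?_ ?_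
  · rw [closure_Ioo hb₀.ne]
    exact continuousOn_sinLogCoboundary hb
  have hσ {y : ℝ} (hy : y ∈ Ioo 0 b) : |σ| * y ≤ 1 / 2 :=
    (mul_le_mul_of_nonneg_left hy.2.le (abs_nonneg σ)).trans hb
  have hhalf {y : ℝ} (hy : y ∈ Ioo 0 b) : 1 / 2 ≤ 1 + σ * y := half_le_one_add_mul hy.1.le (hσ hy)
  refine (convex_Ioo 0 b).lipschitzOnWith_of_nnnorm_hasDerivWithin_le (fun y hy =>
    (hasDerivAt_sinLogCoboundary hy.1.ne' (by linarith [hhalf hy])).hasDerivWithinAt) ?_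
  intro y hy
  rw [← NNReal.coe_le_coe, coe_nnnorm, norm_eq_abs]
  have hfirst : |(cos (log (y / (1 + σ * y))) - cos (log y)) / y| ≤ 2 * |σ| := by
    rw [abs_div, abs_of_pos hy.1, div_le_iff₀ hy.1]
    exact (abs_cos_sub_cos_le _ _).trans (abs_log_div_one_add_mul_sub_log_le hy.1.le (hσ hy))
  have hsecond : |cos (log (y / (1 + σ * y))) * (σ / (1 + σ * y))| ≤ 2 * |σ| := by
    have hquot : |σ / (1 + σ * y)| ≤ 2 * |σ| := by
      have hpos : 0 < 1 + σ * y := by linarith [hhalf hy]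
      rw [abs_div, abs_of_pos hpos, div_le_iff₀ hpos]
      nlinarith [hhalf hy, abs_nonneg σ]
    rw [abs_mul]
    exact (mul_le_of_le_one_left (abs_nonneg _) (abs_cos_le_one _)).trans hquot
  calc _ ≤ 2 * |σ| + 2 * |σ| := (abs_sub _ _).trans (add_le_add hfirst hsecond)
    _ = ((4 * ‖σ‖₊ : ℝ≥0) : ℝ) := by
      push_cast
      rw [norm_eq_abs]
      ring

lemma exists_lipschitzOnWith_le {φ : ℝ → ℝ} {K : ℝ≥0} (hb : 0 < b)
    (hφ : LipschitzOnWith K φ (Icc 0 b)) (m : ℝ) :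
    ∃ (L : ℝ≥0) (g : ℝ → ℝ), LipschitzOnWith L g (Ici 0) ∧ (∀ y ≤ b / 2, g y = φ y) ∧
      (∀ y ≤ b, g y ≤ φ y) ∧ ∀ y, b ≤ y → g y ≤ m := by
  set s : ℝ≥0 := ‖φ b - m‖₊ / ⟨b / 2, (half_pos hb).le⟩
  have hs : s * (b / 2) = |φ b - m| := div_mul_cancel₀ _ (half_pos hb).ne'
  have hmin : LipschitzOnWith (K * 1) (fun y => φ (min y b)) (Ici 0) :=
    hφ.comp (LipschitzWith.id.min_const b).lipschitzOnWith
      fun y hy => ⟨le_min hy hb.le, min_le_right _ _⟩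
  have hramp : LipschitzWith s fun y => s * max (y - b / 2) 0 := by
    refine .of_dist_le_mul fun y z => ?_
    rw [dist_eq, dist_eq, ← mul_sub, abs_mul, NNReal.abs_eq]
    refine mul_le_mul_of_nonneg_left ?_ s.coe_nonneg
    simpa only [sub_sub_sub_cancel_right] using abs_max_sub_max_le_abs (y - b / 2) (z - b / 2) 0
  refine ⟨K * 1 + s, fun y => φ (min y b) - s * max (y - b / 2) 0,
    hmin.sub hramp.lipschitzOnWith, ?_, ?_, ?_⟩
  · intro y hy
    simp only [min_eq_left (hy.trans (half_le_self hb.le)), max_eq_right (sub_nonpos.2 hy)]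
    simp
  · intro y hy
    simp only [min_eq_left hy]
    exact sub_le_self _ (by positivity)
  · intro y hy
    have hhalf : s * (b / 2) ≤ s * max (y - b / 2) 0 := by
      gcongr
      exact le_max_of_le_left (by linarith)
    simp only [min_eq_right hy]
    linarith [le_abs_self (φ b - m)]

end LipschitzPotential

section NoSubaction

variable {ρ σ : ℝ} {T f u : ℝ → ℝ}

lemma exists_potential (hρ : 0 < ρ) (hT : ∀ᶠ x in 𝓝[≥] 0, T x = fareyBranch ρ σ x) :
    ∃ (K : ℝ≥0) (g : ℝ → ℝ), LipschitzOnWith K g (Ici 0) ∧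
      (∀ᶠ x in 𝓝[≥] 0, g (x ^ ρ) = sinLogRpow ρ (T x) - sinLogRpow ρ x) ∧
      ∀ x ≥ 0, g (x ^ ρ) ≤ sinLogRpow ρ (T x) - sinLogRpow ρ x := by
  have hσ : ∀ᶠ y in 𝓝[≥] 0, |σ| * y ≤ 1 / 2 := by
    have : Tendsto (fun y => |σ| * y) (𝓝[≥] 0) (𝓝 0) :=
      (Continuous.tendsto' (by fun_prop) 0 0 (mul_zero _)).mono_left nhdsWithin_le_nhds
    exact this.eventually_le_const one_half_pos
  obtain ⟨b, hb, hbsub⟩ := mem_nhdsGE_iff_exists_Icc_subset.1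
    (((tendsto_rpow_nhdsGE_zero (one_div_pos.2 hρ)).eventually hT).and hσ)
  have hcob : ∀ x ≥ 0, x ^ ρ ≤ b →
      sinLogCoboundary σ (x ^ ρ) = sinLogRpow ρ (T x) - sinLogRpow ρ x := by
    intro x hx hxb
    have hxρ : 0 ≤ x ^ ρ := rpow_nonneg hx ρ
    obtain ⟨hTx, hσx⟩ := hbsub ⟨hxρ, hxb⟩
    rw [← rpow_mul hx, mul_one_div_cancel hρ.ne', rpow_one] at hTx
    rw [hTx, sinLogCoboundary_rpow hρ.ne' hx (by linarith [half_le_one_add_mul hxρ hσx])]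
  obtain ⟨K, g, hg, heq, hle, hlow⟩ := exists_lipschitzOnWith_le hb
    (lipschitzOnWith_sinLogCoboundary hb (hbsub ⟨hb.le, le_rfl⟩).2) (-2)
  refine ⟨K, g, hg, ?_, fun x hx => ?_⟩
  · filter_upwards [self_mem_nhdsWithin, (tendsto_rpow_nhdsGE_zero hρ).eventually
      (Icc_mem_nhdsGE (half_pos hb))] with x hx hxb
    rw [heq _ hxb.2, hcob x hx (hxb.2.trans (half_le_self hb.le))]
  · obtain hxb | hxb := le_total (x ^ ρ) b
    · exact (hle _ hxb).trans_eq (hcob x hx hxb)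
    · linarith [hlow _ hxb, (abs_le.1 (abs_sinLogRpow_le ρ (T x))).1,
        (abs_le.1 (abs_sinLogRpow_le ρ x)).2]

lemma not_isSubaction_of_eventuallyEq_coboundary (hρ : 0 < ρ) (hσ : σ ≠ 0)
    (hT : ∀ᶠ x in 𝓝[≥] 0, T x = fareyBranch ρ σ x)
    (hf : ∀ᶠ x in 𝓝[≥] 0, f x = sinLogRpow ρ (T x) - sinLogRpow ρ x)
    (hm : ergMax T f ≤ 0) (hu : ContinuousWithinAt u (Icc 0 1) 0) : ¬ IsSubaction T f u := by
  intro hsub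
  rw [ContinuousWithinAt, nhdsWithin_Icc_eq_nhdsGE one_pos] at hu
  have hmono : ∀ᶠ x in 𝓝[≥] 0, u x - sinLogRpow ρ x ≤ u (T x) - sinLogRpow ρ (T x) := by
    filter_upwards [hf, Icc_mem_nhdsGE one_pos] with x hfx hx
    linarith [hsub x hx]
  have hux : Tendsto (fun t => u (invRoot ρ t)) atTop (𝓝 (u 0)) :=
    hu.comp (tendsto_invRoot_atTop hρ)
  have hw : ∀ᶠ t in atTop, u (invRoot ρ t) + sin (log t)
      ≤ u (invRoot ρ (t + σ)) + sin (log (t + σ)) := by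
    filter_upwards [(tendsto_invRoot_atTop hρ).eventually (hT.and hmono), eventually_gt_atTop 0,
      eventually_ge_atTop (-σ)] with t ⟨hTt, hle⟩ ht htσ
    have htσ₀ : 0 ≤ t + σ := by linarith
    rw [hTt, fareyBranch_invRoot hρ.ne' ht htσ₀, sinLogRpow_invRoot hρ.ne' ht.le,
      sinLogRpow_invRoot hρ.ne' htσ₀] at hle
    simpa only [sub_neg_eq_add] using hle
  have hbound : ∀ᶠ t in atTop, |u (invRoot ρ t) + sin (log t)| ≤ |u 0| + 1 + 1 := by
    filter_upwards [hux.abs.eventually_le_const (lt_add_one |u 0|)] with t ht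
    exact (abs_add_le _ _).trans (add_le_add ht (abs_sin_le_one _))
  obtain ⟨l, hl⟩ := exists_tendsto_of_eventually_le_comp_add hσ hw hbound
  have hnat : Tendsto (fun n : ℕ => |σ| * n) atTop atTop :=
    tendsto_natCast_atTop_atTop.const_mul_atTop (abs_pos.2 hσ)
  refine not_tendsto_sin_log_mul_natCast (abs_ne_zero.2 hσ) (l - u 0) ?_
  simpa using hl.sub (hux.comp hnat)

end NoSubaction

theorem farey_no_continuous_subaction_general {ρ σ : ℝ} (hρ : ρ ∈ Ioc (0 : ℝ) 1) (hσ : σ ≠ 0)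
    {T : ℝ → ℝ} (hT : ∀ᶠ x in 𝓝[≥] 0, T x = x / (1 + σ * x ^ ρ) ^ (1 / ρ)) :
    ∃ f : ℝ → ℝ, MemCmod (fun h => h ^ ρ) f ∧
      ¬ ∃ u : ℝ → ℝ, ContinuousWithinAt u (Icc 0 1) 0 ∧ IsSubaction T f u := by
  obtain ⟨K, g, hg, hcob, hle⟩ := exists_potential hρ.1 hT
  have hT₀ : T 0 = 0 := by simpa using hT.self_of_nhdsWithin self_mem_Ici
  have hg₀ : g (0 ^ ρ) = 0 := by simpa [hT₀] using hcob.self_of_nhdsWithin self_mem_Ici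
  have hcont : ContinuousOn (fun x => g (x ^ ρ)) (Icc 0 1) :=
    hg.continuousOn.comp (continuous_rpow_const hρ.1.le).continuousOn
      fun x hx => rpow_nonneg hx.1 ρ
  have hmax : ergMax T (fun x => g (x ^ ρ)) = g (0 ^ ρ) :=
    ergMax_eq_of_fixedPoint (by simp) hT₀ hcont (measurable_sinLogRpow ρ) (abs_sinLogRpow_le ρ)
      fun x hx => by linarith [hle x hx.1]
  refine ⟨fun x => g (x ^ ρ), memCmod_rpow_comp_rpow hρ hg, ?_⟩
  rintro ⟨u, hu, hsub⟩
  exact not_isSubaction_of_eventuallyEq_coboundary hρ.1 hσ hT hcob (hmax.trans hg₀).le hu hsub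

theorem farey_no_continuous_subaction
    (ρ : ℝ) (hρ : ρ ∈ Ioc (0:ℝ) 1)
    (F G : ℝ → ℝ)
    (hFmaps : MapsTo F (Icc 0 1) (Icc 0 1))
    (hFloc : ∃ ε > (0:ℝ), ∀ x ∈ Ico (0:ℝ) ε, F x = x / (1 - x ^ ρ) ^ (1/ρ))
    (hGmaps : MapsTo G (Icc 0 1) (Icc 0 1))
    (hG : ∀ x ∈ Icc (0:ℝ) 1, G x = x / (1 + x ^ ρ) ^ (1/ρ))
    (α β h₀ : ℝ) (hh₀ : h₀ ∈ Ioo (0:ℝ) 1)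
    (hconc : ConcaveModulus (omegaAB α β h₀))
    (hαβ : (0 ≤ α ∧ α < ρ ∧ 0 ≤ β ∧ 0 < α + β) ∨ (α = ρ ∧ β = 0)) :
    ∃ f g : ℝ → ℝ, MemCmod (omegaAB α β h₀) f ∧ MemCmod (omegaAB α β h₀) g ∧
      (¬ ∃ u : ℝ → ℝ, ContinuousOn u (Icc 0 1) ∧ IsSubaction F f u) ∧
      (¬ ∃ u : ℝ → ℝ, ContinuousOn u (Icc 0 1) ∧ IsSubaction G g u) := by
  obtain ⟨C, hC, hω⟩ := exists_rpow_le_mul_omegaAB hρ.1 hh₀ (β := β) (α := α)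
    (hαβ.elim (fun h => h.2.2.1) (fun h => h.2.ge)) (hαβ.imp_left fun h => h.2.1)
  have hF : ∀ᶠ x in 𝓝[≥] 0, F x = x / (1 + -1 * x ^ ρ) ^ (1 / ρ) := by
    obtain ⟨ε, hε, hFε⟩ := hFloc
    filter_upwards [Ico_mem_nhdsGE hε] with x hx
    rw [hFε x hx, neg_one_mul, sub_eq_add_neg]
  have hG' : ∀ᶠ x in 𝓝[≥] 0, G x = x / (1 + 1 * x ^ ρ) ^ (1 / ρ) := by
    filter_upwards [Icc_mem_nhdsGE one_pos] with x hx
    rw [hG x hx, one_mul]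
  obtain ⟨f, hf, hfu⟩ := farey_no_continuous_subaction_general hρ (neg_ne_zero.2 one_ne_zero) hF
  obtain ⟨g, hg, hgu⟩ := farey_no_continuous_subaction_general hρ one_ne_zero hG'
  exact ⟨f, g, hf.mono hC hω, hg.mono hC hω,
    fun ⟨u, hu, hsub⟩ => hfu ⟨u, hu 0 (by simp), hsub⟩,
    fun ⟨u, hu, hsub⟩ => hgu ⟨u, hu 0 (by simp), hsub⟩⟩

end
end

section
/- Let T(x) = x(1 − V(x)) for x near 0, where T is invertible near 0 and V : [0,∞) → (0,1) is continuous, increasing, and regularly varying at 0 with index σ > 0. Let b be the inverse function of x ↦ 1/V(1/x) and let (w_n) be defined by w_{n+1} = T(w_n) with w₀ > 0 close enough to 0. Then w_n ~ 1/(σ^{1/σ} b(n)) as n → ∞, that is, lim_{n→∞} w_n · σ^{1/σ} b(n) = 1. -/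
open Set Filter Topology Real

/-!
The orbit is compared with the flow of `x' = -x V(x)`, which takes time `∫ u in x..a, 1 / (u V(u))`
to descend from `a` to `x`. By monotonicity and regular variation of `V`, one step of `T` costs a
flow time tending to `1`, so by Cesàro averaging the flow time from `a` to `w n` is asymptotic
to `n`. By Karamata's theorem, which is dominated convergence under Potter's bound, it is also
asymptotic to `1 / (σ V(w n))`. Therefore `n V(w n) → 1 / σ`, while `n V(1 / b n) = 1` for large
`n`, and regular variation turns the limit `1 / σ` of `V(w n) / V(1 / b n)` into the limit
`σ ^ (-1 / σ)` of `w n * b n`.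
-/

open MeasureTheory

/-- The time that the flow of `x' = -x V(x)` takes to descend from `a` to `x`; it is negative for
`x > a`. -/
noncomputable def flowTime (V : ℝ → ℝ) (a x : ℝ) : ℝ :=
  ∫ u in x..a, (u * V u)⁻¹

theorem tendsto_div_natCast_of_tendsto_sub {u : ℕ → ℝ} {l : ℝ}
    (h : Tendsto (fun n => u (n + 1) - u n) atTop (𝓝 l)) :
    Tendsto (fun n : ℕ => u n / n) atTop (𝓝 l) := by
  have h₀ : Tendsto (fun n : ℕ => u 0 / n) atTop (𝓝 0) := tendsto_const_div_atTop_nhds_zero_nat _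
  have hsum := h.cesaro.add h₀
  simp only [Finset.sum_range_sub, add_zero] at hsum
  refine hsum.congr fun n => ?_
  ring

section Monotone

variable {V : ℝ → ℝ} {ι : Type*} {l : Filter ι}

theorem tendsto_nhdsGT_zero_of_tendsto_comp (hmono : MonotoneOn V (Ioi 0))
    (hpos : ∀ x > 0, 0 < V x) {y : ι → ℝ} (hy : ∀ᶠ i in l, 0 < y i)
    (hVy : Tendsto (fun i => V (y i)) l (𝓝 0)) : Tendsto y l (𝓝[>] 0) := by
  refine tendsto_nhdsWithin_iff.2 ⟨tendsto_order.2 ⟨fun a ha => ?_, fun a ha => ?_⟩, hy⟩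
  · exact hy.mono fun i hi => ha.trans hi
  · filter_upwards [hVy.eventually_lt_const (hpos a ha), hy] with i hi hyi
    exact hmono.reflect_lt hyi ha hi

theorem tendsto_nhdsGT_zero_of_orbit (hmono : MonotoneOn V (Ioi 0)) (hpos : ∀ x > 0, 0 < V x)
    {w : ℕ → ℝ} (hrec : ∀ n, w (n + 1) = w n * (1 - V (w n))) (hw₀ : ∀ n, 0 < w n) :
    Tendsto w atTop (𝓝[>] 0) := by
  have hanti : Antitone w := antitone_nat_of_succ_le fun n => by
    rw [hrec]
    exact mul_le_of_le_one_right (hw₀ n).le (sub_le_self 1 (hpos _ (hw₀ n)).le)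
  have hbdd : BddBelow (range w) := ⟨0, forall_mem_range.2 fun n => (hw₀ n).le⟩
  have hlim := tendsto_atTop_ciInf hanti hbdd
  set L := ⨅ n, w n
  have hdrop : Tendsto (fun n => w n * V (w n)) atTop (𝓝 0) := by
    have hsub := hlim.sub (hlim.comp (tendsto_add_atTop_nat 1))
    rw [sub_self] at hsub
    refine hsub.congr fun n => ?_
    simp only [Function.comp, hrec]
    ring
  have hL : L = 0 := by
    refine le_antisymm (not_lt.1 fun hL => ?_) (le_ciInf fun n => (hw₀ n).le)
    have hVL := hpos L hL
    have hle : L * V L ≤ 0 := ge_of_tendsto' hdrop fun n =>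
      mul_le_mul (ciInf_le hbdd n) (hmono hL (hw₀ n) (ciInf_le hbdd n)) hVL.le (hw₀ n).le
    exact hle.not_gt (mul_pos hL hVL)
  exact tendsto_nhdsWithin_iff.2 ⟨hL ▸ hlim, .of_forall hw₀⟩

theorem antitoneOn_inv_mul_self (hmono : MonotoneOn V (Ioi 0)) (hpos : ∀ x > 0, 0 < V x) :
    AntitoneOn (fun u => (u * V u)⁻¹) (Ioi 0) := by
  intro x hx y hy hxy
  have hVx := hpos x hx
  have hVxy := hmono hx hy hxy
  have hx₀ : 0 < x := hx
  have hy₀ : 0 < y := hy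
  dsimp only
  gcongr

theorem intervalIntegrable_inv_mul_self (hmono : MonotoneOn V (Ioi 0)) (hpos : ∀ x > 0, 0 < V x)
    {x y : ℝ} (hx : 0 < x) (hy : 0 < y) :
    IntervalIntegrable (fun u => (u * V u)⁻¹) volume x y :=
  ((antitoneOn_inv_mul_self hmono hpos).mono
    fun _ hu => (lt_min hx hy).trans_le hu.1).intervalIntegrable

theorem flowTime_add_flowTime (hmono : MonotoneOn V (Ioi 0)) (hpos : ∀ x > 0, 0 < V x)
    {x y z : ℝ} (hx : 0 < x) (hy : 0 < y) (hz : 0 < z) :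
    flowTime V y x + flowTime V z y = flowTime V z x :=
  intervalIntegral.integral_add_adjacent_intervals
    (intervalIntegrable_inv_mul_self hmono hpos hx hy)
    (intervalIntegrable_inv_mul_self hmono hpos hy hz)

theorem flowTime_mem_Icc (hmono : MonotoneOn V (Ioi 0)) (hpos : ∀ x > 0, 0 < V x)
    {x y : ℝ} (hx : 0 < x) (hxy : x ≤ y) :
    flowTime V y x ∈ Icc ((y - x) * (y * V y)⁻¹) ((y - x) * (x * V x)⁻¹) := by
  have hanti := antitoneOn_inv_mul_self hmono hpos
  have hint := intervalIntegrable_inv_mul_self hmono hpos hx (hx.trans_le hxy)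
  have hpos' {u : ℝ} (hu : u ∈ Icc x y) : u ∈ Ioi 0 := hx.trans_le hu.1
  constructor
  · simpa only [flowTime, intervalIntegral.integral_const, smul_eq_mul] using
      intervalIntegral.integral_mono_on hxy intervalIntegrable_const hint
      fun u hu => hanti (hpos' hu) (hx.trans_le hxy) hu.2
  · simpa only [flowTime, intervalIntegral.integral_const, smul_eq_mul] using
      intervalIntegral.integral_mono_on hxy hint intervalIntegrable_const
      fun u hu => hanti hx (hpos' hu) hu.1

theorem antitoneOn_div_mul_comp_mul (hmono : MonotoneOn V (Ioi 0)) (hpos : ∀ x > 0, 0 < V x)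
    {x : ℝ} (hx : 0 < x) : AntitoneOn (fun t => V x / (t * V (t * x))) (Ioi 0) := by
  intro s (hs : 0 < s) t (ht : 0 < t) hst
  have hsx : 0 < s * x := mul_pos hs hx
  have htx : 0 < t * x := mul_pos ht hx
  have hVx := hpos x hx
  have hVsx := hpos _ hsx
  have hVst : V (s * x) ≤ V (t * x) := hmono hsx htx (by gcongr)
  dsimp only
  gcongr

theorem mul_flowTime_eq_integral_Ioi {a x : ℝ} (hx : 0 < x) (hxa : x ≤ a) :
    V x * flowTime V a x =
      ∫ t in Ioi 1, (Iic (a / x)).indicator (fun t => V x / (t * V (t * x))) t := by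
  rw [setIntegral_indicator measurableSet_Iic, Ioi_inter_Iic,
    ← intervalIntegral.integral_of_le ((one_le_div hx).2 hxa)]
  have hsubst := intervalIntegral.mul_integral_comp_mul_right (a := 1) (b := a / x)
    (f := fun u => (u * V u)⁻¹) x
  rw [one_mul, div_mul_cancel₀ _ hx.ne'] at hsubst
  rw [flowTime, ← hsubst, ← mul_assoc, ← intervalIntegral.integral_const_mul]
  congr 1 with t
  field_simp

end Monotone

namespace RegVary0

variable {V : ℝ → ℝ} {σ : ℝ} {ι : Type*} {l : Filter ι}

theorem exists_two_rpow_pow_mul_le (hV : RegVary0 V σ) (hpos : ∀ x > 0, 0 < V x) {ρ : ℝ}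
    (hρ : ρ < σ) :
    ∃ δ > 0, ∀ x > 0, ∀ n : ℕ, 2 ^ n * x ≤ δ → (2 ^ ρ) ^ n * V x ≤ V (2 ^ n * x) := by
  have hev : ∀ᶠ x in 𝓝[>] 0, (2 : ℝ) ^ ρ < V (2 * x) / V x :=
    (hV 2 two_pos).eventually_const_lt (rpow_lt_rpow_of_exponent_lt one_lt_two hρ)
  obtain ⟨δ, hδ, hsub⟩ := mem_nhdsGT_iff_exists_Ioc_subset.1 hev
  refine ⟨δ, hδ, fun x hx n => ?_⟩
  induction n with
  | zero => simp
  | succ n ih =>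
    intro hn
    have hx' : 0 < 2 ^ n * x := by positivity
    have hxδ : 2 ^ n * x ≤ δ := by rw [pow_succ] at hn; linarith
    have hdouble := (lt_div_iff₀ (hpos _ hx')).1 (hsub ⟨hx', hxδ⟩)
    calc (2 ^ ρ) ^ (n + 1) * V x = 2 ^ ρ * ((2 ^ ρ) ^ n * V x) := by ring
      _ ≤ 2 ^ ρ * V (2 ^ n * x) := by gcongr; exact ih hxδ
      _ ≤ V (2 * (2 ^ n * x)) := hdouble.le
      _ = V (2 ^ (n + 1) * x) := by ring_nf

/-- Potter's bound. -/
theorem exists_rpow_mul_le (hV : RegVary0 V σ) (hmono : MonotoneOn V (Ioi 0))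
    (hpos : ∀ x > 0, 0 < V x) {ρ : ℝ} (hρ₀ : 0 ≤ ρ) (hρ : ρ < σ) :
    ∃ δ > 0, ∀ x > 0, ∀ t ≥ 1, t * x ≤ δ → t ^ ρ * V x ≤ 2 ^ ρ * V (t * x) := by
  obtain ⟨δ, hδ, hdyadic⟩ := hV.exists_two_rpow_pow_mul_le hpos hρ
  refine ⟨δ, hδ, fun x hx t ht htx => ?_⟩
  obtain ⟨n, hnt, htn⟩ := exists_nat_pow_near ht one_lt_two
  have hle : 2 ^ n * x ≤ t * x := by gcongr
  have hVx := hpos x hx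
  calc t ^ ρ * V x ≤ (2 ^ (n + 1)) ^ ρ * V x := by gcongr
    _ = 2 ^ ρ * ((2 ^ ρ) ^ n * V x) := by rw [← rpow_pow_comm zero_le_two]; ring
    _ ≤ 2 ^ ρ * V (2 ^ n * x) := by gcongr; exact hdyadic x hx n (hle.trans htx)
    _ ≤ 2 ^ ρ * V (t * x) := by
      gcongr
      exact hmono (by positivity : 0 < 2 ^ n * x) (by positivity : 0 < t * x) hle

theorem tendsto_zero (hV : RegVary0 V σ) (hσ : 0 < σ) (hmono : MonotoneOn V (Ioi 0))
    (hpos : ∀ x > 0, 0 < V x) : Tendsto V (𝓝[>] 0) (𝓝 0) := by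
  obtain ⟨ρ, hρ₀, hρ⟩ := exists_between hσ
  obtain ⟨δ, hδ, hpotter⟩ := hV.exists_rpow_mul_le hmono hpos hρ₀.le hρ
  have hlim : Tendsto (fun x => (2 : ℝ) ^ ρ * V δ * (x / δ) ^ ρ) (𝓝[>] 0) (𝓝 0) := by
    have hcont : Continuous fun x => (2 : ℝ) ^ ρ * V δ * (x / δ) ^ ρ := by
      fun_prop (disch := exact hρ₀.le)
    simpa [hρ₀.ne'] using (hcont.tendsto 0).mono_left nhdsWithin_le_nhds
  refine tendsto_of_tendsto_of_tendsto_of_le_of_le' tendsto_const_nhds hlim ?_ ?_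
  · filter_upwards [self_mem_nhdsWithin] with x hx using (hpos x hx).le
  · filter_upwards [Ioc_mem_nhdsGT hδ] with x ⟨hx, hxδ⟩
    have hbound := hpotter x hx (δ / x) ((one_le_div hx).2 hxδ) (div_mul_cancel₀ δ hx.ne').le
    rw [div_mul_cancel₀ δ hx.ne'] at hbound
    have hδx : 0 < (δ / x) ^ ρ := by positivity
    rw [← inv_div, inv_rpow (by positivity), ← div_eq_mul_inv, le_div_iff₀ hδx]
    linarith

theorem tendsto_comp_mul_div (hV : RegVary0 V σ) (hmono : MonotoneOn V (Ioi 0))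
    (hpos : ∀ x > 0, 0 < V x) {x c : ι → ℝ} {t : ℝ} (ht : 0 < t) (hx : Tendsto x l (𝓝[>] 0))
    (hc : Tendsto c l (𝓝 t)) :
    Tendsto (fun i => V (c i * x i) / V (x i)) l (𝓝 (t ^ σ)) := by
  have hx₀ : ∀ᶠ i in l, 0 < x i := hx.eventually self_mem_nhdsWithin
  have hcont : ContinuousAt (fun s : ℝ => s ^ σ) t := continuousAt_rpow_const _ _ (.inl ht.ne')
  have hmul {s : ℝ} (hs : 0 < s) : Tendsto (fun i => V (s * x i) / V (x i)) l (𝓝 (s ^ σ)) :=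
    (hV s hs).comp hx
  refine tendsto_order.2 ⟨fun a ha => ?_, fun a ha => ?_⟩
  · obtain ⟨s, ⟨has, hs₀⟩, hst⟩ := (((hcont.eventually_const_lt ha).and
      (lt_mem_nhds ht)).filter_mono nhdsWithin_le_nhds |>.and
      (self_mem_nhdsWithin : Iio t ∈ 𝓝[<] t)).exists
    filter_upwards [hx₀, (hmul hs₀).eventually_const_lt has, hc.eventually_const_lt hst]
      with i hxi hai hsi
    have hVi := hpos _ hxi
    have hsx : 0 < s * x i := mul_pos hs₀ hxi
    have hle : s * x i ≤ c i * x i := by gcongr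
    refine hai.trans_le ?_
    gcongr
    exact hmono hsx (hsx.trans_le hle) hle
  · obtain ⟨s, hsa, hts⟩ := ((hcont.eventually_lt_const ha).filter_mono nhdsWithin_le_nhds |>.and
      (self_mem_nhdsWithin : Ioi t ∈ 𝓝[>] t)).exists
    filter_upwards [hx₀, (hmul (ht.trans hts)).eventually_lt_const hsa, hc.eventually_lt_const hts,
      hc.eventually_const_lt ht] with i hxi hai hsi hci
    have hVi := hpos _ hxi
    have hcx : 0 < c i * x i := mul_pos hci hxi
    have hle : c i * x i ≤ s * x i := by gcongr
    refine lt_of_le_of_lt ?_ hai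
    gcongr
    exact hmono hcx (hcx.trans_le hle) hle

theorem tendsto_div_of_tendsto_comp_div (hV : RegVary0 V σ) (hσ : 0 < σ)
    (hmono : MonotoneOn V (Ioi 0)) (hpos : ∀ x > 0, 0 < V x) {x y : ι → ℝ} {t : ℝ} (ht : 0 < t)
    (hx : ∀ᶠ i in l, 0 < x i) (hy : Tendsto y l (𝓝[>] 0))
    (h : Tendsto (fun i => V (x i) / V (y i)) l (𝓝 (t ^ σ))) :
    Tendsto (fun i => x i / y i) l (𝓝 t) := by
  have hy₀ : ∀ᶠ i in l, 0 < y i := hy.eventually self_mem_nhdsWithin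
  have hmul {s : ℝ} (hs : 0 < s) : Tendsto (fun i => V (s * y i) / V (y i)) l (𝓝 (s ^ σ)) :=
    (hV s hs).comp hy
  refine tendsto_order.2 ⟨fun a ha => ?_, fun a ha => ?_⟩
  · obtain ⟨s, hs, hst⟩ := exists_between (max_lt ha ht)
    obtain ⟨has, hs₀⟩ := max_lt_iff.1 hs
    filter_upwards [hx, hy₀, (hmul hs₀).eventually_lt h (rpow_lt_rpow hs₀.le hst hσ)]
      with i hxi hyi hi
    rw [div_lt_div_iff_of_pos_right (hpos _ hyi)] at hi
    exact has.trans ((lt_div_iff₀ hyi).2 (hmono.reflect_lt (mul_pos hs₀ hyi) hxi hi))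
  · have ha₀ := ht.trans ha
    filter_upwards [hx, hy₀, h.eventually_lt (hmul ha₀) (rpow_lt_rpow ht.le ha hσ)]
      with i hxi hyi hi
    rw [div_lt_div_iff_of_pos_right (hpos _ hyi)] at hi
    exact (div_lt_iff₀ hyi).2 (hmono.reflect_lt hxi (mul_pos ha₀ hyi) hi)

theorem tendsto_div_mul_comp_mul (hV : RegVary0 V σ) {t : ℝ} (ht : 0 < t) :
    Tendsto (fun x => V x / (t * V (t * x))) (𝓝[>] 0) (𝓝 (t ^ (-σ - 1))) := by
  have hlim := ((hV t ht).inv₀ (by positivity)).div_const t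
  rw [← rpow_neg ht.le, ← rpow_sub_one ht.ne'] at hlim
  refine hlim.congr fun x => ?_
  rw [inv_div, div_div, mul_comm t (V _)]

/-- Karamata's theorem, up to the substitution `u = t * x`. -/
theorem exists_tendsto_integral_Ioi (hV : RegVary0 V σ) (hσ : 0 < σ)
    (hmono : MonotoneOn V (Ioi 0)) (hpos : ∀ x > 0, 0 < V x) :
    ∃ δ > 0, Tendsto (fun x => ∫ t in Ioi 1,
      (Iic (δ / x)).indicator (fun t => V x / (t * V (t * x))) t) (𝓝[>] 0) (𝓝 (1 / σ)) := by
  obtain ⟨ρ, hρ₀, hρ⟩ := exists_between hσ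
  obtain ⟨δ, hδ, hpotter⟩ := hV.exists_rpow_mul_le hmono hpos hρ₀.le hρ
  have hpower : ∫ t in Ioi (1 : ℝ), t ^ (-σ - 1) = 1 / σ := by
    rw [integral_Ioi_rpow_of_lt (by linarith) one_pos]
    simp
  rw [← hpower]
  refine ⟨δ, hδ, tendsto_integral_filter_of_dominated_convergence
    (fun t => 2 ^ ρ * t ^ (-ρ - 1)) ?measurable ?dominated ?integrable ?pointwise⟩
  case measurable =>
    filter_upwards [self_mem_nhdsWithin] with x hx
    exact ((aemeasurable_restrict_of_antitoneOn measurableSet_Ioi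
      ((antitoneOn_div_mul_comp_mul hmono hpos hx).mono
        (Ioi_subset_Ioi zero_le_one))).indicator measurableSet_Iic).aestronglyMeasurable
  case dominated =>
    filter_upwards [self_mem_nhdsWithin] with x (hx : 0 < x)
    filter_upwards [ae_restrict_mem measurableSet_Ioi] with t (ht : 1 < t)
    have ht₀ := one_pos.trans ht
    have hVx := hpos x hx
    have hVtx := hpos _ (mul_pos ht₀ hx)
    rw [norm_indicator_eq_indicator_norm]
    refine indicator_apply_le' (fun htx => ?_) (fun _ => by positivity)
    have hbound := hpotter x hx t ht.le ((le_div_iff₀ hx).1 htx)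
    rw [norm_of_nonneg (by positivity), rpow_sub_one ht₀.ne', rpow_neg ht₀.le]
    field_simp
    linarith
  case integrable => exact (integrableOn_Ioi_rpow_of_lt (by linarith) one_pos).const_mul _
  case pointwise =>
    filter_upwards [ae_restrict_mem measurableSet_Ioi] with t (ht : 1 < t)
    have ht₀ := one_pos.trans ht
    refine (hV.tendsto_div_mul_comp_mul ht₀).congr' ?_
    filter_upwards [Ioc_mem_nhdsGT (div_pos hδ ht₀)] with x ⟨hx, hxt⟩
    rw [indicator_of_mem (mem_Iic.2 ((le_div_comm₀ ht₀ hx).2 hxt))]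

/-- Karamata's theorem. -/
theorem tendsto_mul_flowTime (hV : RegVary0 V σ) (hσ : 0 < σ) (hmono : MonotoneOn V (Ioi 0))
    (hpos : ∀ x > 0, 0 < V x) {a : ℝ} (ha : 0 < a) :
    Tendsto (fun x => V x * flowTime V a x) (𝓝[>] 0) (𝓝 (1 / σ)) := by
  obtain ⟨δ, hδ, hlim⟩ := hV.exists_tendsto_integral_Ioi hσ hmono hpos
  have hconst := (hV.tendsto_zero hσ hmono hpos).mul_const (flowTime V a δ)
  have hsum := hlim.add hconst
  rw [zero_mul, add_zero] at hsum
  refine hsum.congr' ?_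
  filter_upwards [Ioc_mem_nhdsGT hδ] with x ⟨hx, hxδ⟩
  rw [← mul_flowTime_eq_integral_Ioi hx hxδ, ← mul_add,
    flowTime_add_flowTime hmono hpos hx hδ ha]

theorem tendsto_flowTime_step (hV : RegVary0 V σ) (hσ : 0 < σ) (hmono : MonotoneOn V (Ioi 0))
    (hpos : ∀ x > 0, 0 < V x) :
    Tendsto (fun x => flowTime V x (x * (1 - V x))) (𝓝[>] 0) (𝓝 1) := by
  have hfactor : Tendsto (fun x => 1 - V x) (𝓝[>] 0) (𝓝 1) := by
    simpa using (hV.tendsto_zero hσ hmono hpos).const_sub 1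
  have hratio := hV.tendsto_comp_mul_div hmono hpos one_pos tendsto_id hfactor
  have hupper := (hfactor.mul hratio).inv₀ (by simp)
  simp only [id, one_rpow, mul_one, inv_one] at hupper
  have hmem : ∀ᶠ x in 𝓝[>] 0,
      flowTime V x (x * (1 - V x)) ∈ Icc 1 ((1 - V x) * (V ((1 - V x) * x) / V x))⁻¹ := by
    filter_upwards [self_mem_nhdsWithin, hfactor.eventually_const_lt one_pos] with x
      (hx : 0 < x) hx'
    have hVx := hpos x hx
    have hTx : 0 < (1 - V x) * x := mul_pos hx' hx
    have hVTx := hpos _ hTx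
    have hbounds := flowTime_mem_Icc hmono hpos hTx (y := x) (by nlinarith)
    have hlength : x - (1 - V x) * x = x * V x := by ring
    rw [hlength, mul_inv_cancel₀ (by positivity)] at hbounds
    rw [mul_comm x]
    convert hbounds using 2
    field_simp
  exact tendsto_of_tendsto_of_tendsto_of_le_of_le' tendsto_const_nhds hupper
    (hmem.mono fun _ h => h.1) (hmem.mono fun _ h => h.2)

theorem tendsto_natCast_mul_comp_orbit (hV : RegVary0 V σ) (hσ : 0 < σ)
    (hmono : MonotoneOn V (Ioi 0)) (hpos : ∀ x > 0, 0 < V x) {w : ℕ → ℝ}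
    (hrec : ∀ n, w (n + 1) = w n * (1 - V (w n))) (hw₀ : ∀ n, 0 < w n) :
    Tendsto (fun n : ℕ => n * V (w n)) atTop (𝓝 (1 / σ)) := by
  have hw := tendsto_nhdsGT_zero_of_orbit hmono hpos hrec hw₀
  have hstep : Tendsto (fun n => flowTime V 1 (w (n + 1)) - flowTime V 1 (w n)) atTop (𝓝 1) := by
    refine ((hV.tendsto_flowTime_step hσ hmono hpos).comp hw).congr fun n => ?_
    rw [← flowTime_add_flowTime hmono hpos (hw₀ (n + 1)) (hw₀ n) one_pos, add_sub_cancel_right,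
      hrec, Function.comp]
  have haverage := tendsto_div_natCast_of_tendsto_sub (u := fun n => flowTime V 1 (w n)) hstep
  have hkaramata := (hV.tendsto_mul_flowTime hσ hmono hpos one_pos).comp hw
  have hquot := hkaramata.div haverage one_ne_zero
  rw [div_one] at hquot
  refine hquot.congr' ?_
  filter_upwards [haverage.eventually_ne one_ne_zero] with n hn
  obtain ⟨htime, hn₀⟩ := div_ne_zero_iff.1 hn
  rw [Pi.div_apply, Function.comp_apply]
  field_simp

theorem tendsto_mul_of_tendsto_mul_comp (hV : RegVary0 V σ) (hσ : 0 < σ)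
    (hmono : MonotoneOn V (Ioi 0)) (hpos : ∀ x > 0, 0 < V x) {s x y : ι → ℝ} {t : ℝ} (ht : 0 < t)
    (hs : Tendsto s l atTop) (hx : ∀ᶠ i in l, 0 < x i)
    (hy : ∀ᶠ i in l, 0 < y i ∧ V (1 / y i) = 1 / s i)
    (h : Tendsto (fun i => s i * V (x i)) l (𝓝 (t ^ σ))) :
    Tendsto (fun i => x i * y i) l (𝓝 t) := by
  have hinv : Tendsto (fun i => 1 / s i) l (𝓝 0) := hs.const_div_atTop 1
  have hy₀ : Tendsto (fun i => 1 / y i) l (𝓝[>] 0) :=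
    tendsto_nhdsGT_zero_of_tendsto_comp hmono hpos (hy.mono fun i hi => one_div_pos.2 hi.1)
      (hinv.congr' (hy.mono fun i hi => hi.2.symm))
  have hratio : Tendsto (fun i => V (x i) / V (1 / y i)) l (𝓝 (t ^ σ)) := by
    refine h.congr' (hy.mono fun i hi => ?_)
    dsimp only
    rw [hi.2, div_div_eq_mul_div, div_one, mul_comm]
  refine (hV.tendsto_div_of_tendsto_comp_div hσ hmono hpos ht hx hy₀ hratio).congr fun i => ?_
  rw [div_div_eq_mul_div, div_one]

end RegVary0

theorem eventually_comp_one_div_eq_one_div {V b : ℝ → ℝ} (hcont : ContinuousOn V (Ioi 0))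
    (hpos : ∀ x > 0, 0 < V x) (hV₀ : Tendsto V (𝓝[>] 0) (𝓝 0))
    (hb : ∀ x > 0, b (1 / V (1 / x)) = x) :
    ∀ᶠ s in atTop, 0 < b s ∧ V (1 / b s) = 1 / s := by
  filter_upwards [eventually_ge_atTop (1 / V 1), eventually_gt_atTop 0] with s hs hs₀
  obtain ⟨y, hy, hVy⟩ : 1 / s ∈ V '' Ioi 0 :=
    isPreconnected_Ioi.intermediate_value_Ioc (l := 𝓝[>] 0) (mem_Ioi.2 one_pos) inf_le_right
      hcont hV₀ ⟨by positivity, (one_div_le (hpos 1 one_pos) hs₀).1 hs⟩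
  have hbs : b s = 1 / y := by
    simpa only [one_div_one_div, hVy] using hb (1 / y) (one_div_pos.2 hy)
  rw [hbs, one_div_one_div]
  exact ⟨one_div_pos.2 hy, hVy⟩

theorem mul_one_sub_mem_Ioo {x v δ : ℝ} (hx : x ∈ Ioo 0 δ) (hv : v ∈ Ioo 0 1) :
    x * (1 - v) ∈ Ioo 0 δ :=
  ⟨mul_pos hx.1 (sub_pos.2 hv.2),
    (mul_lt_of_lt_one_right hx.1 (sub_lt_self 1 hv.1)).trans hx.2⟩

theorem orbit_asymptotics_general {T V b : ℝ → ℝ} {σ : ℝ} (hσ : 0 < σ)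
    (hVcont : ContinuousOn V (Ioi 0)) (hVmono : MonotoneOn V (Ioi 0)) (hVpos : ∀ x > 0, 0 < V x)
    (hVreg : RegVary0 V σ) (hT : ∀ᶠ x in 𝓝[>] 0, T x = x * (1 - V x))
    (hb : ∀ x > 0, b (1 / V (1 / x)) = x) :
    ∃ δ > 0, ∀ w : ℕ → ℝ, w 0 ∈ Ioo 0 δ → (∀ n, w (n + 1) = T (w n)) →
      Tendsto (fun n : ℕ => w n * (σ ^ (1 / σ) * b n)) atTop (𝓝 1) := by
  have hV₀ := hVreg.tendsto_zero hσ hVmono hVpos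
  obtain ⟨δ, hδ, hsub⟩ :=
    mem_nhdsGT_iff_exists_Ioo_subset.1 (hT.and (hV₀.eventually_lt_const one_pos))
  refine ⟨δ, hδ, fun w hw₀ hwT => ?_⟩
  have hmem (n : ℕ) : w n ∈ Ioo 0 δ := by
    induction n with
    | zero => exact hw₀
    | succ n ih =>
      rw [hwT, (hsub ih).1]
      exact mul_one_sub_mem_Ioo ih ⟨hVpos _ ih.1, (hsub ih).2⟩
  have hpos (n : ℕ) : 0 < w n := (hmem n).1
  have hrec (n : ℕ) : w (n + 1) = w n * (1 - V (w n)) := (hwT n).trans (hsub (hmem n)).1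
  have hnV := hVreg.tendsto_natCast_mul_comp_orbit hσ hVmono hVpos hrec hpos
  have hbn := tendsto_natCast_atTop_atTop.eventually
    (eventually_comp_one_div_eq_one_div hVcont hVpos hV₀ hb)
  have hroot : 1 / σ = ((σ ^ (1 / σ))⁻¹) ^ σ := by
    rw [inv_rpow (by positivity), ← rpow_mul hσ.le, one_div_mul_cancel hσ.ne', rpow_one, one_div]
  have hwb : Tendsto (fun n : ℕ => w n * b n) atTop (𝓝 (σ ^ (1 / σ))⁻¹) :=
    hVreg.tendsto_mul_of_tendsto_mul_comp hσ hVmono hVpos (by positivity)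
      tendsto_natCast_atTop_atTop (.of_forall hpos) hbn (hroot ▸ hnV)
  have hlim := hwb.mul_const (σ ^ (1 / σ))
  rw [inv_mul_cancel₀ (by positivity)] at hlim
  refine hlim.congr fun n => ?_
  rw [mul_assoc, mul_comm (b n)]

theorem orbit_asymptotics
    (T V b : ℝ → ℝ) (σ : ℝ) (hσ : 0 < σ)
    (hVcont : ContinuousOn V (Ici 0)) (hVmono : StrictMonoOn V (Ici 0))
    (hVrange : ∀ x > (0:ℝ), V x ∈ Ioo (0:ℝ) 1)
    (hVreg : RegVary0 V σ)
    (hloc : ∃ ε > (0:ℝ), InjOn T (Ico 0 ε) ∧ ∀ x ∈ Ico (0:ℝ) ε, T x = x * (1 - V x))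
    (hb : ∀ x > (0:ℝ), b (1 / V (1 / x)) = x) :
    ∃ δ > (0:ℝ), ∀ w : ℕ → ℝ, w 0 ∈ Ioo 0 δ → (∀ n, w (n + 1) = T (w n)) →
      Tendsto (fun n : ℕ => w n * (σ ^ (1 / σ) * b n)) atTop (𝓝 1) := by
  obtain ⟨ε, hε, -, hT⟩ := hloc
  exact orbit_asymptotics_general hσ (hVcont.mono Ioi_subset_Ici_self)
    (hVmono.monotoneOn.mono Ioi_subset_Ici_self) (fun x hx => (hVrange x hx).1) hVreg
    (by filter_upwards [Ioo_mem_nhdsGT hε] with x hx using hT x ⟨hx.1.le, hx.2⟩) hb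
end
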